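/- Let q be a prime power, n > k ≥ 1, and let f(x) = Σ_{j=0}^{k} a_j x^{q^j} ∈ F_{q^n}[x] be a monic F_q-linearized polynomial of q-degree k (a_k = 1) which is not a monomial and satisfies a_0 = 0. Let v = min{ j : a_j ≠ 0 } and h = dim_{F_q} ker(f), and for i ≥ 1 let N_i = #{ m ∈ F_{q^n} : dim_{F_q} ker(f(x) − m·x) = i }. Then Σ_{i=1}^{n−1} N_i (q^i − 1)(q^i − q) ≥ q^n − (q^k − q − 1)(q^k − q − 2)·√(q^n) − 2q^{k−v} − q^k + q^{h+1} − q^h + 1. -/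

import Mathlib

section
open Polynomial

namespace HW

def Wt (L : Type*) [Field L] (lam w : ℕ) : Submodule L L[X][X] where
  carrier := {p | ∀ l i, (p.coeff l).coeff i ≠ 0 → lam * i + l ≤ w}
  add_mem' := by
    intro a b ha hb l i h
    by_cases h1 : (a.coeff l).coeff i = 0
    · by_cases h2 : (b.coeff l).coeff i = 0
      · exfalso; apply h; simp [h1, h2]
      · exact hb l i h2
    · exact ha l i h1
  zero_mem' := by intro l i h; simp at h
  smul_mem' := by
    intro c a ha l i h
    apply ha l i
    intro h1
    apply h
    simp [h1]

variable {L : Type*} [Field L]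

lemma mem_Wt {lam w : ℕ} {p : L[X][X]} :
    p ∈ Wt L lam w ↔ ∀ l i, (p.coeff l).coeff i ≠ 0 → lam * i + l ≤ w := Iff.rfl

lemma Wt_mono {lam w w' : ℕ} (h : w ≤ w') : Wt L lam w ≤ Wt L lam w' := by
  intro p hp l i hi
  exact (hp l i hi).trans h

lemma Wt_mul {lam w w' : ℕ} {p r : L[X][X]} (hp : p ∈ Wt L lam w) (hr : r ∈ Wt L lam w') :
    p * r ∈ Wt L lam (w + w') := by
  intro l i hi
  rw [Polynomial.coeff_mul, Polynomial.finsetSum_coeff] at hi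
  obtain ⟨⟨l1, l2⟩, hl, h2⟩ := Finset.exists_ne_zero_of_sum_ne_zero hi
  rw [Polynomial.coeff_mul] at h2
  obtain ⟨⟨i1, i2⟩, hi', h3⟩ := Finset.exists_ne_zero_of_sum_ne_zero h2
  rw [Finset.HasAntidiagonal.mem_antidiagonal] at hl hi'
  dsimp only at hl hi' h3
  have h4 := hp l1 i1 (left_ne_zero_of_mul h3)
  have h5 := hr l2 i2 (right_ne_zero_of_mul h3)
  subst hl hi'
  nlinarith

lemma Wt_one {lam : ℕ} : (1 : L[X][X]) ∈ Wt L lam 0 := by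
  intro l i hi
  rw [Polynomial.coeff_one] at hi
  split_ifs at hi with h
  · rw [Polynomial.coeff_one] at hi
    split_ifs at hi with h'
    · subst h h'; simp
    · simp at hi
  · simp at hi

lemma Wt_pow {lam w : ℕ} {p : L[X][X]} (hp : p ∈ Wt L lam w) (s : ℕ) :
    p ^ s ∈ Wt L lam (s * w) := by
  induction s with
  | zero => simpa using Wt_one
  | succ s ih =>
    rw [pow_succ, Nat.succ_mul]
    exact Wt_mul ih hp

/-- the monomial `z^i t^l` -/
noncomputable def mon (L : Type*) [Field L] (i l : ℕ) : L[X][X] := monomial l (monomial i (1 : L))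

lemma coeff_mon (i l i' l' : ℕ) :
    ((mon L i l).coeff l').coeff i' = if l = l' ∧ i = i' then 1 else 0 := by
  unfold mon
  rw [Polynomial.coeff_monomial]
  by_cases h : l = l'
  · simp [h, Polynomial.coeff_monomial]
  · simp [h]

lemma mon_eq (i l : ℕ) : mon L i l = C (X ^ i) * X ^ l := by
  unfold mon
  rw [← C_mul_X_pow_eq_monomial, ← Polynomial.X_pow_eq_monomial]

lemma mon_mem {lam i l w : ℕ} (h : lam * i + l ≤ w) : mon L i l ∈ Wt L lam w := by
  intro l' i' hi
  rw [coeff_mon] at hi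
  split_ifs at hi with h1
  · obtain ⟨rfl, rfl⟩ := h1; exact h
  · simp at hi

lemma Wt_C_mul {lam w i w' : ℕ} {p : L[X][X]} {c : L[X]}
    (hc : ∀ j, c.coeff j ≠ 0 → lam * j + i ≤ w') (hp : p ∈ Wt L lam w) :
    C c * X ^ i * p ∈ Wt L lam (w' + w) := by
  refine Wt_mul ?_ hp
  intro l j hj
  rw [Polynomial.coeff_C_mul_X_pow] at hj
  split_ifs at hj with h
  · subst h; exact hc j hj
  · simp at hj

lemma Wt_mod {lam d w : ℕ} {G : L[X][X]} (hG : G.Monic) (hd : G.natDegree = d)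
    (hGw : G ∈ Wt L lam d) {p : L[X][X]} (hp : p ∈ Wt L lam w) : p %ₘ G ∈ Wt L lam w := by
  induction hn : p.natDegree using Nat.strong_induction_on generalizing p with
  | _ n ih =>
    by_cases hlt : p.degree < G.degree
    · rwa [(Polynomial.modByMonic_eq_self_iff hG).2 hlt]
    · by_cases hp0 : p = 0
      · rw [hp0, Polynomial.zero_modByMonic]; exact Submodule.zero_mem _
      push Not at hlt
      have hdn : d ≤ n := by
        rw [← hd, ← hn]; exact Polynomial.natDegree_le_natDegree hlt
      set p' := p - C p.leadingCoeff * X ^ (n - d) * G with hp'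
      have e1 : p %ₘ G = p' %ₘ G := by
        rw [hp', Polynomial.sub_modByMonic]
        rw [(Polynomial.modByMonic_eq_zero_iff_dvd hG).2 (Dvd.intro_left _ rfl), sub_zero]
      have hw' : ∀ j, p.leadingCoeff.coeff j ≠ 0 → lam * j + n ≤ w := by
        intro j hj
        rw [← hn]
        exact hp _ j hj
      have e2 : p' ∈ Wt L lam w := by
        apply Submodule.sub_mem _ hp
        by_cases hw : d ≤ w
        · have := Wt_C_mul (lam := lam) (i := n - d) (w' := w - d) (c := p.leadingCoeff) (fun j hj => by
            have := hw' j hj; omega) hGw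
          rwa [Nat.sub_add_cancel hw] at this
        · exfalso
          have h0 : p.leadingCoeff ≠ 0 := by simpa using hp0
          obtain ⟨j, hj⟩ : ∃ j, p.leadingCoeff.coeff j ≠ 0 := by
            by_contra hcon
            push Not at hcon
            exact h0 (Polynomial.ext (by simpa using hcon))
          have := hw' j hj
          omega
      rw [e1]
      have hdeg : p'.degree < p.degree := by
        have := Polynomial.div_wf_lemma ⟨hlt, hp0⟩ hG
        rw [hp', mul_comm]
        rw [hn, hd] at this
        exact this
      by_cases hp'0 : p' = 0
      · rw [hp'0, Polynomial.zero_modByMonic]; exact Submodule.zero_mem _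
      exact ih p'.natDegree (by rw [← hn]; exact Polynomial.natDegree_lt_natDegree hp'0 hdeg) e2 rfl

/-- truncated space -/
noncomputable def DD (L : Type*) [Field L] (lam d w : ℕ) : Submodule L L[X][X] :=
  Wt L lam w ⊓ (Polynomial.degreeLT L[X] d).restrictScalars L

lemma mem_DD {lam d w : ℕ} {p : L[X][X]} :
    p ∈ DD L lam d w ↔ p ∈ Wt L lam w ∧ ∀ l, d ≤ l → p.coeff l = 0 := by
  unfold DD
  rw [Submodule.mem_inf, Submodule.restrictScalars_mem, Polynomial.mem_degreeLT,
    Polynomial.degree_lt_iff_coeff_zero]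

def II (lam d w : ℕ) : Finset (ℕ × ℕ) :=
  (Finset.range (w + 1) ×ˢ Finset.range d).filter (fun x => lam * x.1 + x.2 ≤ w)

lemma mem_II {lam d w : ℕ} (hl : 0 < lam) {x : ℕ × ℕ} :
    x ∈ II lam d w ↔ x.2 < d ∧ lam * x.1 + x.2 ≤ w := by
  unfold II
  simp only [Finset.mem_filter, Finset.mem_product, Finset.mem_range]
  constructor
  · tauto
  · rintro ⟨h1, h2⟩
    refine ⟨⟨?_, h1⟩, h2⟩
    nlinarith

lemma coeff2_sum {ι : Type*} (S : Finset ι) (u : ι → L) (P : ι → L[X][X]) (l i : ℕ) :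
    ((∑ x ∈ S, u x • P x).coeff l).coeff i = ∑ x ∈ S, u x * ((P x).coeff l).coeff i := by
  rw [Polynomial.finsetSum_coeff, Polynomial.finsetSum_coeff]
  simp

lemma coeff2_monsum (S : Finset (ℕ × ℕ)) (u : ℕ × ℕ → L) (l i : ℕ) :
    ((∑ x ∈ S, u x • mon L x.1 x.2).coeff l).coeff i = if (i, l) ∈ S then u (i, l) else 0 := by
  rw [coeff2_sum]
  by_cases h : (i, l) ∈ S
  · rw [if_pos h, Finset.sum_eq_single (i, l)]
    · simp [coeff_mon]
    · rintro ⟨i', l'⟩ _ hne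
      rw [coeff_mon, if_neg, mul_zero]
      rintro ⟨rfl, rfl⟩; exact hne rfl
    · intro h'; exact absurd h h'
  · rw [if_neg h]
    apply Finset.sum_eq_zero
    rintro ⟨i', l'⟩ h'
    rw [coeff_mon, if_neg, mul_zero]
    rintro ⟨rfl, rfl⟩; exact h h'

lemma ext2 {p r : L[X][X]} (h : ∀ l i, (p.coeff l).coeff i = (r.coeff l).coeff i) : p = r :=
  Polynomial.ext fun l => Polynomial.ext fun i => h l i

noncomputable def DDequiv (L : Type*) [Field L] {lam d w : ℕ} (hl : 0 < lam) :
    DD L lam d w ≃ₗ[L] (II lam d w → L) where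
  toFun p x := (p.1.coeff x.1.2).coeff x.1.1
  map_add' := by intro a b; ext x; simp
  map_smul' := by intro c a; ext x; simp
  invFun u := ⟨∑ x ∈ II lam d w, (if h : x ∈ II lam d w then u ⟨x, h⟩ else 0) • mon L x.1 x.2, by
    rw [mem_DD]
    constructor
    · apply Submodule.sum_mem
      intro x hx
      apply Submodule.smul_mem
      exact mon_mem ((mem_II hl).1 hx).2
    · intro l hdl
      ext i
      rw [coeff2_monsum, if_neg]
      · simp
      · rw [mem_II hl]; simp; omega⟩
  left_inv := by
    intro p
    obtain ⟨p, hp⟩ := p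
    apply Subtype.ext
    apply ext2
    intro l i
    have := coeff2_monsum (L := L) (II lam d w) (fun x => (p.coeff x.2).coeff x.1) l i
    simp only
    rw [show (∑ x ∈ II lam d w, (if h : x ∈ II lam d w then (p.coeff x.2).coeff x.1 else 0) • mon L x.1 x.2) = ∑ x ∈ II lam d w, (p.coeff x.2).coeff x.1 • mon L x.1 x.2 from
      Finset.sum_congr rfl (fun x hx => by rw [dif_pos hx])]
    rw [this]
    split_ifs with h
    · rfl
    · by_contra hne
      apply h
      rw [mem_II hl]
      rw [mem_DD] at hp
      refine ⟨?_, hp.1 l i (Ne.symm hne)⟩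
      by_contra hlt
      rw [hp.2 l (by simpa using hlt)] at hne
      simp at hne
  right_inv := by
    intro u
    ext x
    simp only
    rw [coeff2_monsum]
    simp

lemma finrank_DD {lam d w : ℕ} (hl : 0 < lam) :
    Module.finrank L (DD L lam d w) = (II lam d w).card := by
  rw [LinearEquiv.finrank_eq (DDequiv L hl)]
  simp

lemma finite_DD {lam d w : ℕ} (hl : 0 < lam) : Module.Finite L (DD L lam d w) :=
  Module.Finite.equiv (DDequiv L hl).symm

lemma card_II {lam d w0 : ℕ} (hl : 0 < lam) (hd : d ≤ lam * w0 + 1) :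
    (II lam d (lam * w0)).card + ∑ l ∈ Finset.range d, (l + lam - 1) / lam = d * (w0 + 1) := by
  have h1 : II lam d (lam * w0) = (Finset.range d).biUnion
      (fun l => (Finset.range (w0 + 1 - (l + lam - 1) / lam)).image (fun i => (i, l))) := by
    ext ⟨i, l⟩
    rw [mem_II hl]
    simp only [Finset.mem_biUnion, Finset.mem_image, Finset.mem_range, Prod.mk.injEq]
    have key : lam * i + l ≤ lam * w0 ↔ i < w0 + 1 - (l + lam - 1) / lam := by
      rw [Nat.lt_sub_iff_add_lt, Nat.lt_add_one_iff]
      constructor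
      · intro h
        have : (l + lam - 1) / lam < w0 - i + 1 := by
          rw [Nat.div_lt_iff_lt_mul hl]
          obtain ⟨j, rfl⟩ : ∃ j, w0 = i + j := ⟨w0 - i, by
            have : i ≤ w0 := by
              by_contra hh
              push Not at hh
              nlinarith
            omega⟩
          have : l ≤ lam * j := by nlinarith
          have e : i + j - i = j := by omega
          rw [e]
          have : (j+1) * lam = lam * j + lam := by ring
          omega
        have : i ≤ w0 := by
            by_contra hh
            push Not at hh
            nlinarith
        omega
      · intro h
        have h2 : l ≤ lam * ((l + lam - 1) / lam) := by
          have := Nat.div_add_mod (l + lam - 1) lam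
          have := Nat.mod_lt (l + lam - 1) hl
          omega
        nlinarith
    constructor
    · rintro ⟨ha, hb⟩
      exact ⟨l, ha, i, key.1 hb, rfl, rfl⟩
    · rintro ⟨l', ha, i', hb, rfl, rfl⟩
      exact ⟨ha, key.2 hb⟩
  rw [h1, Finset.card_biUnion]
  · rw [← Finset.sum_add_distrib]
    rw [Finset.sum_congr rfl (g := fun _ => w0 + 1)]
    · simp
    · intro l hl'
      rw [Finset.card_image_of_injective _ (fun a b h => (Prod.mk.inj h).1), Finset.card_range]
      apply Nat.sub_add_cancel
      rw [Finset.mem_range] at hl'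
      have : (l + lam - 1) / lam < w0 + 1 := by
        rw [Nat.div_lt_iff_lt_mul hl]
        have : (w0+1) * lam = lam * w0 + lam := by ring
        omega
      omega
  · intro a _ b _ hab
    rw [Function.onFun, Finset.disjoint_left]
    rintro ⟨i, l⟩ h1 h2
    simp only [Finset.mem_image, Prod.mk.injEq] at h1 h2
    obtain ⟨_, _, _, rfl⟩ := h1
    obtain ⟨_, _, _, rfl⟩ := h2
    exact hab rfl

lemma exists_mem_DD (lam : ℕ) (p : L[X][X]) : ∃ w, p ∈ Wt L lam w := by
  classical
  refine ⟨lam * (p.support.sup fun l => (p.coeff l).natDegree) + p.natDegree, ?_⟩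
  intro l i hi
  have h1 : p.coeff l ≠ 0 := by intro h; rw [h] at hi; simp at hi
  have h2 : l ≤ p.natDegree := Polynomial.le_natDegree_of_ne_zero h1
  have h3 : i ≤ (p.coeff l).natDegree := Polynomial.le_natDegree_of_ne_zero hi
  have h4 : (p.coeff l).natDegree ≤ p.support.sup fun l => (p.coeff l).natDegree :=
    Finset.le_sup (f := fun l => (p.coeff l).natDegree) (by simpa using h1)
  have := Nat.mul_le_mul_left lam (h3.trans h4)
  omega

lemma la {V E : Type*} [AddCommGroup V] [Module L V] [AddCommGroup E] [Module L E]
    (D1 D2 : Submodule L V) [Module.Finite L D1] [Module.Finite L D2]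
    (φ2 : D2 →ₗ[L] E) (hs2 : LinearMap.range φ2 = ⊤) (ψ : D1 →ₗ[L] D2)
    (hinj : ∀ x, ψ x = 0 → x = 0) (hker : ∀ x, φ2 (ψ x) = 0) :
    Module.finrank L E + Module.finrank L D1 ≤ Module.finrank L D2 := by
  have r1 := LinearMap.finrank_range_add_finrank_ker φ2
  rw [hs2, finrank_top] at r1
  have hk : LinearMap.range ψ ≤ LinearMap.ker φ2 := by
    rintro _ ⟨p, rfl⟩
    exact hker p
  have r2 := Submodule.finrank_mono hk
  rw [LinearMap.finrank_range_of_inj ((injective_iff_map_eq_zero ψ).2 hinj)] at r2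
  omega

/-- The zero lemma. -/
theorem zero_lemma {lam d w0 : ℕ} (hl : 0 < lam) {G : L[X][X]} (hG : G.Monic)
    (hd : G.natDegree = d) (hGw : G ∈ Wt L lam d) (hprime : Prime G)
    {H : L[X][X]} (hH : H ∈ Wt L lam (lam * w0)) (hndvd : ¬ G ∣ H)
    {E : Type*} [AddCommGroup E] [Module L E] [Module.Finite L E]
    (φ : L[X][X] →ₗ[L] E) (hsurj : Function.Surjective φ)
    (hφG : ∀ r, φ (G * r) = 0) (hφH : ∀ r, φ (H * r) = 0) :
    Module.finrank L E ≤ d * w0 := by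
  classical
  have hmod : ∀ p, φ (p %ₘ G) = φ p := by
    intro p
    conv_rhs => rw [← Polynomial.modByMonic_add_div p G]
    rw [map_add, hφG, add_zero]
  have hmoddeg : ∀ p : L[X][X], ∀ l, d ≤ l → (p %ₘ G).coeff l = 0 := by
    intro p
    rw [← Polynomial.degree_lt_iff_coeff_zero]
    have := Polynomial.degree_modByMonic_lt p hG
    rwa [Polynomial.degree_eq_natDegree hG.ne_zero, hd] at this
  -- choose preimages of a basis
  let b := Module.finBasis L E
  choose pre hpre using fun i => hsurj (b i)
  choose wt hwt using fun i => exists_mem_DD lam (pre i)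
  set W0 := d + ∑ i, wt i with hW0
  let D1 := DD L lam d (lam * W0)
  let D2 := DD L lam d (lam * (W0 + w0))
  have : Module.Finite L D1 := finite_DD hl
  have : Module.Finite L D2 := finite_DD hl
  let φ2 : D2 →ₗ[L] E := φ.comp D2.subtype
  have hs2 : LinearMap.range φ2 = ⊤ := by
    rw [eq_top_iff, ← b.span_eq, Submodule.span_le]
    rintro _ ⟨i, rfl⟩
    refine ⟨⟨pre i %ₘ G, ?_⟩, ?_⟩
    · rw [mem_DD]
      refine ⟨?_, hmoddeg _⟩
      apply Wt_mod hG hd hGw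
      apply Wt_mono _ (hwt i)
      have : wt i ≤ ∑ i, wt i := Finset.single_le_sum (f := wt) (fun _ _ => Nat.zero_le _) (Finset.mem_univ i)
      nlinarith
    · show φ (pre i %ₘ G) = b i
      rw [hmod, hpre]
  let ψ : D1 →ₗ[L] D2 :=
    { toFun := fun p => ⟨(H * p.1) %ₘ G, by
        rw [mem_DD]
        refine ⟨?_, hmoddeg _⟩
        apply Wt_mod hG hd hGw
        have := Wt_mul hH (mem_DD.1 p.2).1
        rwa [← mul_add, add_comm w0] at this⟩
      map_add' := by
        intro a b
        apply Subtype.ext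
        simp [mul_add, Polynomial.add_modByMonic]
      map_smul' := by
        intro c a
        apply Subtype.ext
        have : H * (c • a.1) = (C c : L[X]) • (H * a.1) := by
          rw [mul_smul_comm]
          rw [Polynomial.smul_eq_C_mul, ← algebraMap_smul L[X] c (H * a.1), Polynomial.smul_eq_C_mul]; rfl
        simp only [SetLike.val_smul, RingHom.id_apply]
        rw [this, Polynomial.smul_modByMonic, ← algebraMap_smul L[X] c]; rfl }
  have hψinj : ∀ x, ψ x = 0 → x = 0 := by
    rintro ⟨p, hp⟩ h0
    have h1 : (H * p) %ₘ G = 0 := congrArg Subtype.val h0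
    rw [Polynomial.modByMonic_eq_zero_iff_dvd hG] at h1
    have h2 := (hprime.dvd_or_dvd h1).resolve_left hndvd
    apply Subtype.ext
    show p = 0
    by_contra hp0
    have h3 := Polynomial.degree_le_of_dvd h2 hp0
    have h4 := (Polynomial.degree_lt_iff_coeff_zero p d).2 (mem_DD.1 hp).2
    rw [Polynomial.degree_eq_natDegree hG.ne_zero, hd] at h3
    exact absurd h4 (not_lt.2 h3)
  have hker : ∀ x, φ2 (ψ x) = 0 := by
    intro p
    show φ ((H * p.1) %ₘ G) = 0
    rw [hmod, hφH]
  have r1 := la D1 D2 φ2 hs2 ψ hψinj hker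
  have r3 : Module.finrank L D1 = _ := finrank_DD hl
  have r4 : Module.finrank L D2 = _ := finrank_DD hl
  have q1 : d ≤ lam * W0 := by
    have : d ≤ W0 := by omega
    nlinarith
  have c1 := card_II (lam := lam) (d := d) (w0 := W0) hl (by omega)
  have c2 := card_II (lam := lam) (d := d) (w0 := W0 + w0) hl (by nlinarith)
  have : d * (W0 + w0 + 1) = d * (W0 + 1) + d * w0 := by ring
  omega

end HW
end

section
open Polynomial

namespace HW
variable {L : Type*} [Field L]

noncomputable def ev (T : PowerSeries L) : L[X][X] →+* PowerSeries L :=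
  Polynomial.eval₂RingHom (Polynomial.coeToPowerSeries.ringHom) T

lemma ev_C (T : PowerSeries L) (r : L[X]) : ev T (C r) = (r : PowerSeries L) := by
  simp [ev]

lemma smul_eq_CC (c : L) (p : L[X][X]) : c • p = C (C c) * p := by
  rw [← algebraMap_smul L[X] c p, Polynomial.smul_eq_C_mul]; rfl

lemma ev_smul (T : PowerSeries L) (c : L) (p : L[X][X]) : ev T (c • p) = c • ev T p := by
  rw [smul_eq_CC, map_mul, ev_C, PowerSeries.smul_eq_C_mul, Polynomial.coe_C]

lemma evalEval_smul' (x y c : L) (p : L[X][X]) :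
    Polynomial.evalEval x y (c • p) = c * Polynomial.evalEval x y p := by
  rw [smul_eq_CC, Polynomial.evalEval_mul]; simp

theorem part_B {lam d w0 : ℕ} (hl : 0 < lam) {G : L[X][X]} (hG : G.Monic)
    (hd : G.natDegree = d) (hGw : G ∈ Wt L lam d) (hprime : Prime G)
    {T : PowerSeries L} (hT : ev T G = 0)
    {H : L[X][X]} (hH : H ∈ Wt L lam (lam * w0)) (hndvd : ¬ G ∣ H)
    {m : ℕ} (hm : PowerSeries.X ^ m ∣ ev T H) : m ≤ d * w0 := by
  let φ : L[X][X] →ₗ[L] (Fin m → L) :=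
    { toFun := fun p i => PowerSeries.coeff (i : ℕ) (ev T p)
      map_add' := by intro a b; ext i; simp
      map_smul' := by intro c a; ext i; simp [ev_smul] }
  have := zero_lemma hl hG hd hGw hprime hH hndvd φ ?_ ?_ ?_
  · simpa using this
  · intro u
    refine ⟨C (∑ i : Fin m, C (u i) * X ^ (i : ℕ)), ?_⟩
    ext i
    show PowerSeries.coeff (i : ℕ) (ev T _) = u i
    rw [ev_C, Polynomial.coeff_coe, Polynomial.finsetSum_coeff, Finset.sum_eq_single i]
    · simp
    · intro j _ hj
      rw [Polynomial.coeff_C_mul_X_pow, if_neg]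
      intro h; exact hj (Fin.ext h.symm)
    · simp
  · intro r
    ext i
    show PowerSeries.coeff (i : ℕ) (ev T (G * r)) = 0
    rw [map_mul, hT]; simp
  · intro r
    ext i
    show PowerSeries.coeff (i : ℕ) (ev T (H * r)) = 0
    rw [map_mul]
    exact (PowerSeries.X_pow_dvd_iff.1 (Dvd.dvd.mul_right hm _)) i i.2

lemma part_B' {lam d : ℕ} (hl : 0 < lam) {G : L[X][X]} (hG : G.Monic)
    (hd : G.natDegree = d) (hGw : G ∈ Wt L lam d) (hprime : Prime G)
    {T : PowerSeries L} (hT : ev T G = 0) {p : L[X][X]} (hp : ev T p = 0) : G ∣ p := by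
  by_contra hcon
  obtain ⟨w, hw⟩ := exists_mem_DD lam p
  have hw' : p ∈ Wt L lam (lam * w) := Wt_mono (by nlinarith) hw
  have := part_B hl hG hd hGw hprime hT hw' hcon (m := d * w + 1) (by rw [hp]; exact dvd_zero _)
  omega

theorem part_C {lam d w0 : ℕ} (hl : 0 < lam) {G : L[X][X]} (hG : G.Monic)
    (hd : G.natDegree = d) (hGw : G ∈ Wt L lam d) (hprime : Prime G)
    {H : L[X][X]} (hH : H ∈ Wt L lam (lam * w0)) (hndvd : ¬ G ∣ H)
    (S : Finset (L × L)) (hSG : ∀ x ∈ S, Polynomial.evalEval x.1 x.2 G = 0)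
    (hSH : ∀ x ∈ S, Polynomial.evalEval x.1 x.2 H = 0) : S.card ≤ d * w0 := by
  classical
  let φ : L[X][X] →ₗ[L] (S → L) :=
    { toFun := fun p x => Polynomial.evalEval x.1.1 x.1.2 p
      map_add' := by intro a b; ext i; simp [Polynomial.evalEval_add]
      map_smul' := by intro c a; ext i; simp [evalEval_smul'] }
  have := zero_lemma hl hG hd hGw hprime hH hndvd φ ?_ ?_ ?_
  · simpa using this
  · have sep : ∀ a b : L × L, ∃ p : L[X][X], a ≠ b →
        Polynomial.evalEval a.1 a.2 p = 1 ∧ Polynomial.evalEval b.1 b.2 p = 0 := by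
      rintro ⟨a1, a2⟩ ⟨b1, b2⟩
      by_cases h1 : a1 = b1
      · by_cases h2 : a2 = b2
        · exact ⟨0, fun h => absurd (by rw [h1, h2]) h⟩
        · refine ⟨C (C (a2 - b2)⁻¹) * (X - C (C b2)), fun _ => ?_⟩
          have : a2 - b2 ≠ 0 := sub_ne_zero.2 h2
          simp [Polynomial.evalEval_mul, Polynomial.evalEval_sub, this]
      · refine ⟨C (C (a1 - b1)⁻¹ * (X - C b1)), fun _ => ?_⟩
        have : a1 - b1 ≠ 0 := sub_ne_zero.2 h1
        simp [Polynomial.evalEval_C, this]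
    choose P hP using sep
    intro u
    refine ⟨∑ x : S, u x • ∏ y ∈ S.erase x.1, P x.1 y, ?_⟩
    ext z
    show Polynomial.evalEval z.1.1 z.1.2 _ = u z
    have hprod : ∀ x : S, Polynomial.evalEval z.1.1 z.1.2 (∏ y ∈ S.erase x.1, P x.1 y) =
        if x = z then 1 else 0 := by
      intro x
      rw [← Polynomial.coe_evalEvalRingHom, map_prod]
      split_ifs with h
      · subst h
        apply Finset.prod_eq_one
        intro y hy
        exact (hP x.1 y (Finset.ne_of_mem_erase hy).symm).1
      · apply Finset.prod_eq_zero (i := z.1)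
        · refine Finset.mem_erase.2 ⟨fun h' => h (Subtype.ext h'.symm), z.2⟩
        · exact (hP x.1 z.1 (fun h' => h (Subtype.ext h'))).2
    rw [Polynomial.evalEval_finsetSum]
    simp only [evalEval_smul', hprod]
    simp
  · intro r
    ext x
    show Polynomial.evalEval x.1.1 x.1.2 (G * r) = 0
    rw [Polynomial.evalEval_mul, hSG x.1 x.2, zero_mul]
  · intro r
    ext x
    show Polynomial.evalEval x.1.1 x.1.2 (H * r) = 0
    rw [Polynomial.evalEval_mul, hSH x.1 x.2, zero_mul]

theorem part_D {lam d w0 p e : ℕ} [Fact p.Prime] [CharP L p] (hl : 0 < lam)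
    {G : L[X][X]} (hG : G.Monic)
    (hd : G.natDegree = d) (hGw : G ∈ Wt L lam d) (hprime : Prime G)
    {T : PowerSeries L} (hT : ev T G = 0) (J : Finset (ℕ × ℕ))
    (hJd : ∀ x ∈ J, x.2 < d) (hJw : ∀ x ∈ J, lam * x.1 + x.2 ≤ lam * w0)
    (gg : ℕ × ℕ → L[X][X]) (hgg : ∃ x ∈ J, ¬ G ∣ gg x) (hs : d * w0 < p ^ e) :
    ¬ G ∣ ∑ x ∈ J, mon L x.1 x.2 * gg x ^ (p ^ e) := by
  classical
  intro hdvd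
  have : CharP (PowerSeries L) p := by
    have : Function.Injective (PowerSeries.C : L →+* PowerSeries L) := PowerSeries.C_injective
    exact (RingHom.charP_iff _ this p).1 inferInstance
  have hex : ∃ m, ∃ x ∈ J, ¬ PowerSeries.X ^ m ∣ ev T (gg x) := by
    obtain ⟨x, hx, hG'⟩ := hgg
    have h0 : ev T (gg x) ≠ 0 := fun h => hG' (part_B' hl hG hd hGw hprime hT h)
    by_contra hcon
    push Not at hcon
    apply h0
    ext n
    have := PowerSeries.X_pow_dvd_iff.1 (hcon (n+1) x hx) n (by omega)
    simpa using this
  obtain ⟨x0, hx0, hnd⟩ := Nat.find_spec hex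
  have hmin := fun m => Nat.find_min hex (m := m)
  set m1 := Nat.find hex
  obtain ⟨m, hm⟩ : ∃ m, m1 = m + 1 := by
    rcases m1 with _ | m
    · simp at hnd
    · exact ⟨m, rfl⟩
  have hdiv : ∀ x, ∃ γ, x ∈ J → ev T (gg x) = PowerSeries.X ^ m * γ := by
    intro x
    by_cases hx : x ∈ J
    · have := hmin m (by omega)
      push Not at this
      obtain ⟨γ, hγ⟩ := this x hx
      exact ⟨γ, fun _ => hγ⟩
    · exact ⟨0, fun h => absurd h hx⟩
  choose γ hγ using hdiv
  have hγ0 : PowerSeries.coeff 0 (γ x0) ≠ 0 := by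
    intro h
    apply hnd
    rw [hγ x0 hx0, hm, pow_succ]
    apply mul_dvd_mul_left
    rw [PowerSeries.X_dvd_iff]
    simpa using h
  set c : ℕ × ℕ → L := fun x => PowerSeries.coeff 0 (γ x) with hc
  have hpow : ∀ x, ∃ δ, γ x ^ p ^ e = PowerSeries.C (c x ^ p ^ e) + PowerSeries.X ^ (p ^ e) * δ := by
    intro x
    have h1 : PowerSeries.X ∣ γ x - PowerSeries.C (c x) := by
      rw [PowerSeries.X_dvd_iff]; simp [hc]
    obtain ⟨δ, hδ⟩ := h1
    refine ⟨δ ^ p ^ e, ?_⟩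
    have : γ x = PowerSeries.C (c x) + PowerSeries.X * δ := by rw [← hδ]; ring
    rw [this, add_pow_char_pow, mul_pow, map_pow]
  choose δ hδ using hpow
  set H' : L[X][X] := ∑ x ∈ J, (c x ^ p ^ e) • mon L x.1 x.2 with hH'
  have hH'w : H' ∈ Wt L lam (lam * w0) := by
    apply Submodule.sum_mem
    intro x hx
    exact Submodule.smul_mem _ _ (mon_mem (hJw x hx))
  have hH'0 : H' ≠ 0 := by
    intro h
    have := coeff2_monsum J (fun x => c x ^ p ^ e) x0.2 x0.1
    rw [← hH', h, if_pos hx0] at this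
    simp only [Polynomial.coeff_zero] at this
    exact hγ0 (pow_eq_zero_iff (pow_pos (Fact.out : p.Prime).pos e).ne' |>.1 this.symm)
  have hH'G : ¬ G ∣ H' := by
    intro h
    have h3 := Polynomial.degree_le_of_dvd h hH'0
    rw [Polynomial.degree_eq_natDegree hG.ne_zero, hd] at h3
    have h4 : H'.degree < d := by
      rw [Polynomial.degree_lt_iff_coeff_zero]
      intro l hl
      ext i
      rw [coeff2_monsum, if_neg]
      · simp
      · intro h; have := hJd _ h; simp at this; omega
    exact absurd h4 (not_lt.2 h3)
  have hev : ev T (∑ x ∈ J, mon L x.1 x.2 * gg x ^ (p ^ e)) = 0 := by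
    obtain ⟨r, hr⟩ := hdvd
    rw [hr, map_mul, hT, zero_mul]
  have hev2 : PowerSeries.X ^ (m * p ^ e) * ∑ x ∈ J, ev T (mon L x.1 x.2) * γ x ^ p ^ e = 0 := by
    rw [← hev, map_sum, Finset.mul_sum]
    apply Finset.sum_congr rfl
    intro x hx
    rw [map_mul, map_pow, hγ x hx, mul_pow, pow_mul]
    ring
  have hev3 : ∑ x ∈ J, ev T (mon L x.1 x.2) * γ x ^ p ^ e = 0 := by
    rcases mul_eq_zero.1 hev2 with h | h
    · exact absurd h (pow_ne_zero _ PowerSeries.X_ne_zero)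
    · exact h
  have hev4 : ev T H' + PowerSeries.X ^ (p ^ e) * ∑ x ∈ J, ev T (mon L x.1 x.2) * δ x = 0 := by
    rw [← hev3, hH', map_sum, Finset.mul_sum, ← Finset.sum_add_distrib]
    apply Finset.sum_congr rfl
    intro x hx
    rw [ev_smul, hδ, PowerSeries.smul_eq_C_mul]
    ring
  have hdd : PowerSeries.X ^ (p ^ e) ∣ ev T H' := by
    rw [eq_neg_of_add_eq_zero_left hev4]
    exact (Dvd.intro _ rfl).neg_right
  have := part_B hl hG hd hGw hprime hT hH'w hH'G hdd
  omega

end HW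
end

section
open Polynomial

namespace HW
variable {L : Type*} [Field L]

noncomputable def ee (G : L[X][X]) (d j : ℕ) : L[X][X] :=
  ∑ i ∈ Finset.range (d + 1), if j < i then C (G.coeff i) * X ^ (i - 1 - j) else 0

lemma ee_mem {lam d j : ℕ} {G : L[X][X]} (hGw : G ∈ Wt L lam d) :
    ee G d j ∈ Wt L lam (d - 1 - j) := by
  unfold ee
  apply Submodule.sum_mem
  intro i hi
  split_ifs with h
  · intro l m hm
    rw [Polynomial.coeff_C_mul_X_pow] at hm
    split_ifs at hm with h'
    · subst h'
      have := hGw i m hm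
      omega
    · simp at hm
  · exact Submodule.zero_mem _

lemma ee_last {d : ℕ} {G : L[X][X]} (hG : G.Monic) (hd : G.natDegree = d) (hd1 : 1 ≤ d) :
    ee G d (d - 1) = 1 := by
  unfold ee
  rw [Finset.sum_eq_single d]
  · rw [if_pos (by omega), ← hd, Polynomial.coeff_natDegree, hG.leadingCoeff]
    simp
  · intro i hi hne
    rw [if_neg]
    simp at hi; omega
  · simp

lemma ee_eval {d : ℕ} {G : L[X][X]} (hd : G.natDegree = d) (z Y t : L) :
    (t - Y) * ∑ j ∈ Finset.range d, t ^ j * evalEval z Y (ee G d j) =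
      evalEval z t G - evalEval z Y G := by
  have hev : ∀ y, evalEval z y G = ∑ i ∈ Finset.range (d + 1), (G.coeff i).eval z * y ^ i := by
    intro y
    rw [Polynomial.evalEval, Polynomial.eval_eq_sum_range (p := G) (x := C y), hd, Polynomial.eval_finset_sum]
    simp
  have he : ∀ j, evalEval z Y (ee G d j) = ∑ i ∈ Finset.range (d + 1),
      if j < i then (G.coeff i).eval z * Y ^ (i - 1 - j) else 0 := by
    intro j
    unfold ee
    rw [Polynomial.evalEval_finsetSum]
    apply Finset.sum_congr rfl
    intro i _
    split_ifs <;> simp [evalEval_mul, evalEval_C, evalEval_pow]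
  simp only [hev, he]
  rw [← Finset.sum_sub_distrib]
  simp only [Finset.mul_sum]
  rw [Finset.sum_comm]
  apply Finset.sum_congr rfl
  intro i hi
  rw [← mul_sub, ← (Commute.all t Y).mul_geom_sum₂, Finset.mul_sum, Finset.mul_sum]
  rw [Finset.mem_range] at hi
  symm
  apply Finset.sum_subset_zero_on_sdiff (Finset.range_subset_range.2 (by omega))
  · intro j hj
    simp only [Finset.mem_sdiff, Finset.mem_range] at hj
    rw [if_neg (by omega)]; simp
  · intro j hj
    rw [Finset.mem_range] at hj
    rw [if_pos hj]; ring

lemma evalEval_mon (z t : L) (i l : ℕ) : evalEval z t (mon L i l) = z ^ i * t ^ l := by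
  rw [mon_eq]; simp [evalEval_mul, evalEval_C, evalEval_pow]

noncomputable def MM (G r : L[X][X]) : L[X][X] →ₗ[L] L[X][X] where
  toFun p := (p * r) %ₘ G
  map_add' := by intro a b; rw [add_mul, Polynomial.add_modByMonic]
  map_smul' := by
    intro c a
    rw [smul_mul_assoc, RingHom.id_apply, ← algebraMap_smul L[X] c, Polynomial.smul_modByMonic,
      algebraMap_smul L[X] c]

noncomputable def cf2 (L : Type*) [Field L] (i l : ℕ) : L[X][X] →ₗ[L] L where
  toFun p := (p.coeff l).coeff i
  map_add' := by intro a b; simp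
  map_smul' := by intro a b; simp

lemma exists_ker {ι κ : Type*} [Fintype ι] [Fintype κ] (Φ : (ι → L) →ₗ[L] (κ → L))
    (h : Fintype.card κ < Fintype.card ι) : ∃ u, u ≠ 0 ∧ Φ u = 0 := by
  have := LinearMap.ker_ne_bot_of_finrank_lt (f := Φ) (by simpa using h)
  obtain ⟨u, hu, hne⟩ := Submodule.exists_mem_ne_zero_of_ne_bot this
  exact ⟨u, hne, hu⟩

lemma exists_A {lam d s B α σ wA : ℕ} (hl : 0 < lam) {G : L[X][X]}
    (hwd : d ≤ lam * wA + 1) (hα : d ≤ lam * α + 1)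
    (hBs : B < s) (hBd : d ≤ lam * B + 1)
    (hcount : ((α : ℤ) * d - ∑ j ∈ Finset.range d, ((j / lam : ℕ) : ℤ)) *
      (s * d + (∑ l ∈ Finset.range d, (((l + lam - 1) / lam : ℕ) : ℤ)) - d * (B + 1))
        < d * (wA + 1) - ∑ l ∈ Finset.range d, (((l + lam - 1) / lam : ℕ) : ℤ)) :
    ∃ A ∈ DD L lam d (lam * wA), A ≠ 0 ∧ ∀ j < d, ∀ i < α - j / lam, ∀ m < s, ∀ l < d,
      lam * B < lam * m + l →
      (((A * ee G d j ^ s) %ₘ G).coeff l).coeff (s * i + m) = 0 := by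
  classical
  let J0 : Finset (Σ _ : ℕ, ℕ) := (Finset.range d).sigma (fun j => Finset.range (α - j / lam))
  let Ω : Finset (ℕ × ℕ) := (Finset.range s ×ˢ Finset.range d) \ II lam d (lam * B)
  have hJ0 : (J0.card : ℤ) = (α : ℤ) * d - ∑ j ∈ Finset.range d, ((j / lam : ℕ) : ℤ) := by
    rw [Finset.card_sigma]
    simp only [Finset.card_range]
    push_cast
    rw [eq_sub_iff_add_eq, ← Finset.sum_add_distrib, Finset.sum_congr rfl (g := fun _ => (α : ℤ))]
    · simp [mul_comm]
    · intro j hj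
      rw [Finset.mem_range] at hj
      have : j / lam ≤ α := by
        apply Nat.div_le_of_le_mul; omega
      omega
  have hΩ : (Ω.card : ℤ) = s * d + (∑ l ∈ Finset.range d, (((l + lam - 1) / lam : ℕ) : ℤ)) - d * (B + 1) := by
    have hsub : II lam d (lam * B) ⊆ (Finset.range s ×ˢ Finset.range d) := by
      intro x hx
      rw [mem_II hl] at hx
      simp only [Finset.mem_product, Finset.mem_range]
      refine ⟨?_, hx.1⟩
      have : lam * x.1 ≤ lam * B := by omega
      have := Nat.le_of_mul_le_mul_left this hl
      omega
    have h1 := Finset.card_sdiff_add_card_eq_card hsub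
    have h2 := card_II hl hBd
    rw [Finset.card_product, Finset.card_range, Finset.card_range] at h1
    have h3 : ((Ω.card : ℤ)) + (II lam d (lam * B)).card = s * d := by exact_mod_cast h1
    have h4 : ((II lam d (lam * B)).card : ℤ) + (∑ l ∈ Finset.range d, (((l + lam - 1) / lam : ℕ) : ℤ)) = d * (B + 1) := by
      exact_mod_cast h2
    linarith
  have hII : ((II lam d (lam * wA)).card : ℤ) = d * (wA + 1) - ∑ l ∈ Finset.range d, (((l + lam - 1) / lam : ℕ) : ℤ) := by
    have h2 := card_II hl hwd
    have h4 : ((II lam d (lam * wA)).card : ℤ) + (∑ l ∈ Finset.range d, (((l + lam - 1) / lam : ℕ) : ℤ)) = d * (wA + 1) := by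
      exact_mod_cast h2
    linarith
  rw [← hJ0, ← hΩ, ← hII] at hcount
  let emb : (II lam d (lam * wA) → L) →ₗ[L] L[X][X] :=
    (DD L lam d (lam * wA)).subtype.comp (DDequiv L hl).symm.toLinearMap
  let Φ : (II lam d (lam * wA) → L) →ₗ[L] (J0 × Ω → L) :=
    LinearMap.pi (fun x => (cf2 L (s * x.1.1.2 + x.2.1.1) x.2.1.2).comp
      ((MM G (ee G d x.1.1.1 ^ s)).comp emb))
  obtain ⟨u, hu0, hu⟩ := exists_ker Φ (by
    rw [Fintype.card_prod, Fintype.card_coe, Fintype.card_coe, Fintype.card_coe]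
    exact_mod_cast hcount)
  refine ⟨emb u, ((DDequiv L hl).symm u).2, ?_, ?_⟩
  · intro h
    apply hu0
    have : (DDequiv L (lam := lam) (d := d) (w := lam * wA) hl).symm u = 0 := Subtype.ext h
    exact (LinearEquiv.map_eq_zero_iff _).1 this
  · intro j hj i hi m hm l hl' hb
    have hx1 : (⟨j, i⟩ : Σ _ : ℕ, ℕ) ∈ J0 := by
      simp only [J0, Finset.mem_sigma, Finset.mem_range]; exact ⟨hj, hi⟩
    have hx2 : (m, l) ∈ Ω := by
      simp only [Ω, Finset.mem_sdiff, Finset.mem_product, Finset.mem_range, mem_II hl]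
      refine ⟨⟨hm, hl'⟩, ?_⟩
      rintro ⟨_, h⟩; omega
    exact congrFun hu (⟨⟨_, hx1⟩, ⟨_, hx2⟩⟩ : J0 × Ω)

theorem part_E [IsAlgClosed L] {p e1 e2 lam d B α σ wA : ℕ} [Fact p.Prime] [CharP L p]
    (hl : 0 < lam) {G : L[X][X]} (hG : G.Monic)
    (hd : G.natDegree = d) (hd1 : 1 ≤ d) (hGw : G ∈ Wt L lam d) (hprime : Prime G)
    {T : PowerSeries L} (hT : ev T G = 0)
    (hσ : p ^ e1 = lam * σ) (hwA : wA + σ * (d - 1) = p ^ e1 * α + B)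
    (hGQ : ∀ z t, z ^ p ^ (e1 + e2) = z → evalEval z t G = 0 → evalEval z (t ^ p ^ (e1 + e2)) G = 0)
    (hwd : d ≤ lam * wA + 1) (hα : d ≤ lam * α + 1)
    (hBs : B < p ^ e1) (hBd : d ≤ lam * B + 1)
    (hcount : ((α : ℤ) * d - ∑ j ∈ Finset.range d, ((j / lam : ℕ) : ℤ)) *
      ((p ^ e1 : ℕ) * d + (∑ l ∈ Finset.range d, (((l + lam - 1) / lam : ℕ) : ℤ)) - d * (B + 1))
        < d * (wA + 1) - ∑ l ∈ Finset.range d, (((l + lam - 1) / lam : ℕ) : ℤ))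
    (hs' : d * (α + 1) < p ^ e2) :
    ∃ H ∈ Wt L lam (lam * (α + 1 + p ^ e2 * B)), ¬ G ∣ H ∧
      ∀ z t, z ^ p ^ (e1 + e2) = z → evalEval z t G = 0 → t ^ p ^ (e1 + e2) ≠ t →
        evalEval z t H = 0 := by
  classical
  obtain ⟨A, hAD, hA0, hA⟩ := exists_A (L := L) (σ := σ) (G := G) hl hwd hα hBs hBd hcount
  rw [mem_DD] at hAD
  have hQpos : p ^ (e1 + e2) ≠ 0 := (pow_pos (Fact.out : p.Prime).pos _).ne'
  set s := p ^ e1 with hs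
  have hspos : 0 < s := pow_pos (Fact.out : p.Prime).pos _
  set pj : ℕ → L[X][X] := fun j => (A * ee G d j ^ s) %ₘ G with hpj
  have hpjw : ∀ j < d, pj j ∈ Wt L lam (s * (lam * α - j) + lam * B) := by
    intro j hj
    apply Wt_mod hG hd hGw
    have := Wt_mul hAD.1 (Wt_pow (ee_mem (j := j) hGw) s)
    refine Wt_mono (le_of_eq ?_) this
    have e1' : s * (d - 1 - j) + s * j = s * (d - 1) := by rw [← mul_add]; congr 1; omega
    have e2' : s * (lam * α - j) + s * j = s * (lam * α) := by rw [← mul_add]; congr 1; omega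
    have e3 : lam * wA + s * (d - 1) = s * (lam * α) + lam * B := by
      rw [hσ]
      calc lam * wA + lam * σ * (d - 1) = lam * (wA + σ * (d - 1)) := by ring
        _ = lam * (s * α + B) := by rw [hwA]
        _ = _ := by rw [hσ]; ring
    omega
  have hpjd : ∀ j l, d ≤ l → (pj j).coeff l = 0 := by
    intro j
    rw [← Polynomial.degree_lt_iff_coeff_zero]
    have := Polynomial.degree_modByMonic_lt (A * ee G d j ^ s) hG
    rwa [Polynomial.degree_eq_natDegree hG.ne_zero, hd] at this
  set Ib := II lam d (lam * B) with hIb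
  set cf : ℕ × ℕ → ℕ × ℕ → L := fun x y => ((pj x.2).coeff y.2).coeff (s * x.1 + y.1) with hcf
  have hIbs : ∀ y ∈ Ib, y.1 < s := by
    intro y hy
    rw [hIb, mem_II hl] at hy
    have : lam * y.1 ≤ lam * B := by omega
    have := Nat.le_of_mul_le_mul_left this hl
    omega
  -- decomposition of pj
  have hdecomp : ∀ j < d, pj j = ∑ i ∈ Finset.range (α - j / lam + 1), ∑ y ∈ Ib,
      cf (i, j) y • mon L (s * i + y.1) y.2 := by
    intro j hj
    apply ext2
    intro l M
    rw [Polynomial.finsetSum_coeff, Polynomial.finsetSum_coeff]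
    simp only [coeff2_sum, coeff_mon]
    have hM := Nat.div_add_mod M s
    have hMs := Nat.mod_lt M hspos
    have hjl : j / lam ≤ α := by apply Nat.div_le_of_le_mul; omega
    have hjl2 := Nat.div_add_mod j lam
    have hjl3 := Nat.mod_lt j hl
    by_cases hin : M / s < α - j / lam + 1 ∧ (M % s, l) ∈ Ib
    · rw [Finset.sum_eq_single (M / s)]
      · rw [Finset.sum_eq_single (M % s, l)]
        · simp only [hcf]
          rw [hM]; simp
        · rintro ⟨m, l'⟩ hy hne
          rw [if_neg, mul_zero]
          rintro ⟨rfl, h⟩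
          simp only at h
          apply hne
          have : m = M % s := by omega
          rw [this]
        · intro h; exact absurd hin.2 h
      · intro i _ hne
        apply Finset.sum_eq_zero
        rintro ⟨m, l'⟩ hy
        rw [if_neg, mul_zero]
        rintro ⟨rfl, h⟩
        simp only at h
        apply hne
        have hm := hIbs _ hy
        simp only at hm
        rw [← h, Nat.mul_add_div hspos, Nat.div_eq_of_lt hm, add_zero]
      · intro h; exact absurd (Finset.mem_range.2 hin.1) h
    · rw [Finset.sum_eq_zero]
      · by_contra hne
        have hld : l < d := by
          by_contra h
          rw [hpjd j l (by omega)] at hne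
          simp at hne
        have hw := hpjw j hj l M hne
        have hα' : lam * (α - j / lam) + lam * (j / lam) = lam * α := by
          rw [← mul_add]; congr 1; omega
        have hw2 : lam * M = s * (lam * (M / s)) + lam * (M % s) := by
          conv_lhs => rw [← hM]
          ring
        have hlt : M / s < α - j / lam + 1 := by
          by_contra hcon
          push Not at hcon
          have h1 : lam * (α - j / lam + 1) ≤ lam * (M / s) := Nat.mul_le_mul_left _ hcon
          have h2 : lam * α - j + lam ≤ lam * (M / s) := by
            rw [mul_add] at h1; omega
          have h3 := Nat.mul_le_mul_left s h2
          rw [mul_add] at h3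
          have h4 : lam * B < s * lam := by rw [mul_comm s]; exact Nat.mul_lt_mul_of_pos_left hBs hl
          omega
        apply hin
        refine ⟨hlt, ?_⟩
        rw [hIb, mem_II hl]
        refine ⟨hld, ?_⟩
        simp only
        by_contra hcon
        push Not at hcon
        rcases Nat.lt_succ_iff_lt_or_eq.1 hlt with h | h
        · have := hA j hj (M / s) h (M % s) hMs l hld hcon
          rw [hM] at this
          exact hne this
        · rw [h] at hw2
          have h2 : lam * α - j ≤ lam * (α - j / lam) := by omega
          have h3 := Nat.mul_le_mul_left s h2
          omega
      · intro i hi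
        apply Finset.sum_eq_zero
        rintro ⟨m, l'⟩ hy
        rw [if_neg, mul_zero]
        rintro ⟨rfl, h⟩
        simp only at h
        have hm := hIbs _ hy
        simp only at hm
        apply hin
        rw [← h, Nat.mul_add_div hspos, Nat.div_eq_of_lt hm, add_zero, Nat.mul_add_mod, Nat.mod_eq_of_lt hm]
        exact ⟨Finset.mem_range.1 hi, hy⟩
  have hroot : ∀ a : L, ∃ b, b ^ p ^ (e1 + e2) = a := fun a =>
    IsAlgClosed.exists_pow_nat_eq a (Nat.pos_of_ne_zero hQpos)
  choose rt hrt using hroot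
  set gg : ℕ × ℕ → L[X][X] := fun x => ∑ y ∈ Ib, rt (cf x y) • mon L y.1 y.2 with hgg
  set J : Finset (ℕ × ℕ) := (Finset.range d).biUnion
    (fun j => (Finset.range (α - j / lam + 1)).image (fun i => (i, j))) with hJ
  have hJmem : ∀ x, x ∈ J ↔ x.2 < d ∧ x.1 < α - x.2 / lam + 1 := by
    rintro ⟨i, j⟩
    simp only [hJ, Finset.mem_biUnion, Finset.mem_image, Finset.mem_range, Prod.mk.injEq]
    constructor
    · rintro ⟨j', h1, i', h2, rfl, rfl⟩; exact ⟨h1, h2⟩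
    · rintro ⟨h1, h2⟩; exact ⟨j, h1, i, h2, rfl, rfl⟩
  have hJsum : ∀ (M : Type _) [AddCommMonoid M] (F : ℕ × ℕ → M), ∑ x ∈ J, F x =
      ∑ j ∈ Finset.range d, ∑ i ∈ Finset.range (α - j / lam + 1), F (i, j) := by
    intro M _ F
    rw [hJ, Finset.sum_biUnion]
    · apply Finset.sum_congr rfl
      intro j _
      rw [Finset.sum_image]
      intro a _ b _ h
      exact (Prod.mk.inj h).1
    · intro a _ b _ hab
      rw [Function.onFun, Finset.disjoint_left]
      rintro ⟨i, l⟩ h1 h2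
      simp only [Finset.mem_image, Prod.mk.injEq] at h1 h2
      obtain ⟨_, _, _, rfl⟩ := h1
      obtain ⟨_, _, _, rfl⟩ := h2
      exact hab rfl
  have hJw : ∀ x ∈ J, lam * x.1 + x.2 ≤ lam * (α + 1) := by
    intro x hx
    rw [hJmem] at hx
    have hjl : x.2 / lam ≤ α := by apply Nat.div_le_of_le_mul; omega
    have hjl2 := Nat.div_add_mod x.2 lam
    have hjl3 := Nat.mod_lt x.2 hl
    have h1 : x.1 + x.2 / lam ≤ α := by omega
    have h2 := Nat.mul_le_mul_left lam h1
    rw [mul_add] at h2 ⊢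
    omega
  have hggw : ∀ x, gg x ∈ Wt L lam (lam * B) := by
    intro x
    apply Submodule.sum_mem
    intro y hy
    exact Submodule.smul_mem _ _ (mon_mem ((mem_II hl).1 hy).2)
  have hnv : ∃ x ∈ J, ¬ G ∣ gg x := by
    by_contra hcon
    push Not at hcon
    have hz : ∀ x ∈ J, ∀ y ∈ Ib, cf x y = 0 := by
      intro x hx y hy
      have h0 : gg x = 0 := by
        by_contra hne
        have h3 := Polynomial.degree_le_of_dvd (hcon x hx) hne
        rw [Polynomial.degree_eq_natDegree hG.ne_zero, hd] at h3
        have h4 : (gg x).degree < d := by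
          rw [Polynomial.degree_lt_iff_coeff_zero]
          intro l hl'
          ext i
          rw [coeff2_monsum, if_neg]
          · simp
          · rw [hIb, mem_II hl]; simp; omega
        exact absurd h4 (not_lt.2 h3)
      have h1 := coeff2_monsum Ib (fun y => rt (cf x y)) y.2 y.1
      rw [if_pos hy] at h1
      have h2 : rt (cf x y) = 0 := by
        rw [← h1]
        have : (∑ y ∈ Ib, rt (cf x y) • mon L y.1 y.2) = 0 := h0
        rw [this]; simp
      rw [← hrt (cf x y), h2, zero_pow hQpos]
    have hpd := hdecomp (d - 1) (by omega)
    rw [Finset.sum_eq_zero] at hpd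
    · apply hA0
      rw [← hpd, hpj]
      simp only
      rw [ee_last hG hd hd1, one_pow, mul_one]
      symm
      rw [Polynomial.modByMonic_eq_self_iff hG, Polynomial.degree_eq_natDegree hG.ne_zero, hd,
        Polynomial.degree_lt_iff_coeff_zero]
      exact hAD.2
    · intro i hi
      apply Finset.sum_eq_zero
      intro y hy
      rw [hz (i, d - 1) _ y hy, zero_smul]
      rw [hJmem]
      exact ⟨by simp; omega, by simpa using hi⟩
  refine ⟨∑ x ∈ J, mon L x.1 x.2 * gg x ^ p ^ e2, ?_, ?_, ?_⟩
  · apply Submodule.sum_mem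
    intro x hx
    have := Wt_mul (mon_mem (L := L) (hJw x hx)) (Wt_pow (hggw x) (p ^ e2))
    refine Wt_mono (le_of_eq ?_) this
    ring
  · exact part_D hl hG hd hGw hprime hT J (fun x hx => ((hJmem x).1 hx).1) hJw gg hnv hs'
  · intro z t hz ht hne
    set Y := t ^ p ^ (e1 + e2) with hY
    have hGY := hGQ z t hz ht
    have hmodY : ∀ P : L[X][X], evalEval z Y (P %ₘ G) = evalEval z Y P := by
      intro P
      conv_rhs => rw [← Polynomial.modByMonic_add_div P G]
      rw [evalEval_add, evalEval_mul, hGY, zero_mul, add_zero]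
    have hggQ : ∀ x, evalEval z t (gg x) ^ p ^ (e1 + e2) = ∑ y ∈ Ib, cf x y * (z ^ y.1 * Y ^ y.2) := by
      intro x
      simp only [hgg]
      rw [evalEval_finsetSum, sum_pow_char_pow]
      apply Finset.sum_congr rfl
      intro y _
      rw [evalEval_smul', mul_pow, hrt, evalEval_mon, mul_pow, hY, ← pow_mul, mul_comm y.1, pow_mul, hz,
        ← pow_mul, mul_comm y.2, pow_mul]
    have hpjY : ∀ j < d, evalEval z Y (pj j) = ∑ i ∈ Finset.range (α - j / lam + 1),
        z ^ (s * i) * ∑ y ∈ Ib, cf (i, j) y * (z ^ y.1 * Y ^ y.2) := by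
      intro j hj
      rw [hdecomp j hj, evalEval_finsetSum]
      apply Finset.sum_congr rfl
      intro i _
      rw [evalEval_finsetSum, Finset.mul_sum]
      apply Finset.sum_congr rfl
      intro y _
      rw [evalEval_smul', evalEval_mon, pow_add]
      ring
    have hpow : evalEval z t (∑ x ∈ J, mon L x.1 x.2 * gg x ^ p ^ e2) ^ s = 0 := by
      rw [hJsum, evalEval_finsetSum, hs, sum_pow_char_pow, ← hs]
      have : ∀ j ∈ Finset.range d, (evalEval z t (∑ i ∈ Finset.range (α - j / lam + 1),
          mon L (i, j).1 (i, j).2 * gg (i, j) ^ p ^ e2)) ^ s =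
          evalEval z Y A * (t ^ j * evalEval z Y (ee G d j)) ^ s := by
        intro j hj
        rw [Finset.mem_range] at hj
        rw [evalEval_finsetSum, hs, sum_pow_char_pow, ← hs]
        have h1 : evalEval z Y A * (t ^ j * evalEval z Y (ee G d j)) ^ s =
            (t ^ j) ^ s * evalEval z Y (pj j) := by
          rw [hpj]; simp only
          rw [hmodY, evalEval_mul, evalEval_pow]; ring
        rw [h1, hpjY j hj, Finset.mul_sum]
        apply Finset.sum_congr rfl
        intro i _
        rw [evalEval_mul, mul_pow, evalEval_mon, evalEval_pow, ← pow_mul, mul_comm (p ^ e2), hs, ← pow_add,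
          hggQ, ← hs, mul_pow, ← pow_mul z, mul_comm i s]
        ring
      rw [Finset.sum_congr rfl this, ← Finset.mul_sum, hs, ← sum_pow_char_pow, ← hs]
      have h2 := ee_eval hd z Y t
      rw [ht, hGY, sub_zero] at h2
      have h3 : t - Y ≠ 0 := sub_ne_zero.2 (Ne.symm hne)
      rw [(mul_eq_zero.1 h2).resolve_left h3, zero_pow hspos.ne', mul_zero]
    exact (pow_eq_zero_iff hspos.ne').1 hpow

end HW
end

section
open Polynomial

namespace HW
variable {L : Type*} [Field L]

lemma eval_C_eq_map_swap (x : L) (p : L[X][X]) :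
    eval (C x) p = (Bivariate.swap p).map (evalRingHom x) := by
  have h : (evalRingHom (C x) : L[X][X] →+* L[X]) =
      (mapRingHom (evalRingHom x)).comp (Bivariate.swap (R := L)).toRingEquiv.toRingHom := by
    apply Polynomial.ringHom_ext
    · intro a
      show eval (C x) (C a) = (Bivariate.swap (C a)).map (evalRingHom x)
      rw [Bivariate.swap_C, eval_C, Polynomial.map_map]
      have : (evalRingHom x).comp C = RingHom.id L := by ext; simp
      rw [this, Polynomial.map_id]
    · show eval (C x) X = (Bivariate.swap X).map (evalRingHom x)
      rw [Bivariate.swap_Y]; simp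
  exact congrArg (fun f => f p) h

/-- `P_j = (t^{q^j}-t)/(t^q-t)` -/
noncomputable def PP (L : Type*) [Field L] (q j : ℕ) : L[X] :=
  ∑ i ∈ Finset.range j, (X ^ q - X) ^ (q ^ i - 1)

lemma PP_mul {p e q : ℕ} [Fact p.Prime] [CharP L p] (hq : q = p ^ e) (he : 1 ≤ e) (j : ℕ) :
    PP L q j * (X ^ q - X) = X ^ q ^ j - X := by
  have hq0 : 0 < q := by rw [hq]; exact pow_pos (Fact.out : p.Prime).pos _
  induction j with
  | zero => simp [PP]
  | succ j ih =>
    unfold PP at ih ⊢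
    rw [Finset.sum_range_succ, add_mul, ih, ← pow_succ, Nat.sub_add_cancel (Nat.one_le_pow _ _ hq0)]
    rw [hq, ← pow_mul, sub_pow_char_pow, ← pow_mul, ← pow_add,
      show e + e * j = e * (j + 1) by ring, ← pow_mul]
    ring

lemma monic_XqX {q : ℕ} (hq : 2 ≤ q) : (X ^ q - X : L[X]).Monic ∧ (X ^ q - X : L[X]).natDegree = q := by
  constructor
  · apply monic_X_pow_sub
    rw [degree_X]; exact_mod_cast hq
  · rw [natDegree_sub_eq_left_of_natDegree_lt] <;> simp
    omega

lemma PP_monic {p e q : ℕ} [Fact p.Prime] [CharP L p] (hq : q = p ^ e) (he : 1 ≤ e) {j : ℕ} (hj : 1 ≤ j) :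
    (PP L q j).Monic ∧ (PP L q j).natDegree = q ^ j - q := by
  have hq2 : 2 ≤ q := by
    rw [hq]; calc 2 ≤ p := (Fact.out : p.Prime).two_le
      _ = p ^ 1 := (pow_one p).symm
      _ ≤ p ^ e := Nat.pow_le_pow_right (Fact.out : p.Prime).pos he
  have h := PP_mul (L := L) hq he j
  have hqj : 2 ≤ q ^ j := hq2.trans (by
    calc q = q ^ 1 := (pow_one q).symm
      _ ≤ q ^ j := Nat.pow_le_pow_right (by omega) hj)
  have h1 := monic_XqX (L := L) hq2
  have h2 := monic_XqX (L := L) hqj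
  have h3 : (PP L q j).Monic := by
    rw [← h] at h2
    exact h1.1.of_mul_monic_right h2.1
  refine ⟨h3, ?_⟩
  have h4 := h3.natDegree_mul h1.1
  rw [h, h2.2, h1.2] at h4
  omega

/-- the polynomial `G0` -/
noncomputable def G0 (q v r : ℕ) (c : ℕ → L) : L[X][X] :=
  ∑ i ∈ Finset.range (r + 1), C (C (c i) * X ^ (q ^ r - q ^ i)) * (PP L q (v + i)).map C

lemma coeff_G0 (q v r : ℕ) (c : ℕ → L) (l : ℕ) :
    (G0 q v r c).coeff l = ∑ i ∈ Finset.range (r + 1),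
      C (c i * (PP L q (v + i)).coeff l) * X ^ (q ^ r - q ^ i) := by
  unfold G0
  rw [finsetSum_coeff]
  apply Finset.sum_congr rfl
  intro i _
  rw [coeff_C_mul, coeff_map, C_mul]; ring

section
variable {p e q v r : ℕ} [Fact p.Prime] [CharP L p] (hq : q = p ^ e) (he : 1 ≤ e)
  (hv : 1 ≤ v) {c : ℕ → L}
include hq he

lemma hq2 : 2 ≤ q := by
  rw [hq]; calc 2 ≤ p := (Fact.out : p.Prime).two_le
      _ = p ^ 1 := (pow_one p).symm
      _ ≤ p ^ e := Nat.pow_le_pow_right (Fact.out : p.Prime).pos he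

include hv

lemma G0_monic (hc : c r = 1) : (G0 q v r c).Monic ∧ (G0 q v r c).natDegree = q ^ (v + r) - q := by
  have hq2 := hq2 hq he
  have hm := PP_monic (L := L) hq he (j := v + r) (by omega)
  have hm' : ((PP L q (v + r)).map C).Monic := hm.1.map _
  have hdeg : ((PP L q (v + r)).map (C : L →+* L[X])).natDegree = q ^ (v + r) - q := by
    rw [hm.1.natDegree_map, hm.2]
  have hlow : (∑ i ∈ Finset.range r, C (C (c i) * X ^ (q ^ r - q ^ i)) * (PP L q (v + i)).map C).degree
      < ((PP L q (v + r)).map (C : L →+* L[X])).degree := by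
    rw [degree_eq_natDegree hm'.ne_zero, hdeg]
    refine lt_of_le_of_lt (degree_sum_le _ _) ?_
    rw [Finset.sup_lt_iff (WithBot.bot_lt_coe _)]
    intro i hi
    rw [Finset.mem_range] at hi
    refine lt_of_le_of_lt (degree_mul_le _ _) ?_
    refine lt_of_le_of_lt (add_le_add degree_C_le degree_map_le) ?_
    rw [zero_add]
    have hmi := PP_monic (L := L) hq he (j := v + i) (by omega)
    rw [degree_eq_natDegree hmi.1.ne_zero, hmi.2]
    norm_cast
    have : q ^ (v + i) < q ^ (v + r) := Nat.pow_lt_pow_right (by omega) (by omega)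
    have : q ^ 1 ≤ q ^ (v + i) := Nat.pow_le_pow_right (by omega) (by omega)
    rw [pow_one] at this
    omega
  have hG : G0 q v r c = (∑ i ∈ Finset.range r, C (C (c i) * X ^ (q ^ r - q ^ i)) * (PP L q (v + i)).map C)
      + (PP L q (v + r)).map C := by
    unfold G0
    rw [Finset.sum_range_succ, hc]; simp
  rw [hG]
  refine ⟨hm'.add_of_right hlow, ?_⟩
  rw [natDegree_add_eq_right_of_degree_lt hlow, hdeg]

lemma G0_wt : G0 q v r c ∈ Wt L (q ^ v) (q ^ (v + r) - q) := by
  have hq2 := hq2 hq he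
  intro l m hm
  rw [coeff_G0, finsetSum_coeff] at hm
  obtain ⟨i, hi, h⟩ := Finset.exists_ne_zero_of_sum_ne_zero hm
  rw [Finset.mem_range] at hi
  rw [coeff_C_mul_X_pow] at h
  split_ifs at h with h1
  · have h2 := right_ne_zero_of_mul h
    have h3 := le_natDegree_of_ne_zero h2
    rw [(PP_monic (L := L) hq he (j := v + i) (by omega)).2] at h3
    subst h1
    rw [Nat.mul_sub, ← pow_add, ← pow_add]
    have : q ^ (v + i) ≤ q ^ (v + r) := Nat.pow_le_pow_right (by omega) (by omega)
    have : q ^ 1 ≤ q ^ (v + i) := Nat.pow_le_pow_right (by omega) (by omega)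
    rw [pow_one] at this
    omega
  · simp at h

omit hv in
lemma G0_eval (z t : L) : evalEval z t (G0 q v r c) * (t ^ q - t) =
    ∑ i ∈ Finset.range (r + 1), c i * z ^ (q ^ r - q ^ i) * (t ^ q ^ (v + i) - t) := by
  unfold G0
  rw [evalEval_finsetSum, Finset.sum_mul]
  apply Finset.sum_congr rfl
  intro i _
  rw [evalEval_mul, evalEval_C]
  have h1 : evalEval z t ((PP L q (v + i)).map C) = eval t (PP L q (v + i)) := by
    rw [evalEval, eval_C_eq_map_swap, Bivariate.swap_map_C]; simp
  have h2 := congrArg (eval t) (PP_mul (L := L) hq he (v + i))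
  simp at h2
  rw [h1, ← h2]
  simp
  ring

omit hv in
lemma G0_evalC (t : L) : eval (C t) (G0 q v r c) * C (t ^ q - t) =
    ∑ i ∈ Finset.range (r + 1), C (c i * (t ^ q ^ (v + i) - t)) * X ^ (q ^ r - q ^ i)  := by
  unfold G0
  rw [eval_finsetSum, Finset.sum_mul]
  apply Finset.sum_congr rfl
  intro i _
  rw [eval_mul, eval_C]
  have h1 : eval (C t) ((PP L q (v + i)).map C) = C (eval t (PP L q (v + i))) := by
    rw [eval_C_eq_map_swap, Bivariate.swap_map_C]; simp
  have h2 := congrArg (eval t) (PP_mul (L := L) hq he (v + i))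
  simp at h2
  rw [h1, ← h2]
  simp
  ring

omit hv in
lemma G0_map0 (hc : c r = 1) : (G0 q v r c).map (evalRingHom 0) = PP L q (v + r) := by
  have hq2 := hq2 hq he
  ext l
  rw [coeff_map, coeff_G0, map_sum, Finset.sum_range_succ, Finset.sum_eq_zero]
  · simp [hc]
  · intro i hi
    rw [Finset.mem_range] at hi
    have : q ^ i < q ^ r := Nat.pow_lt_pow_right (by omega) hi
    have : q ^ r - q ^ i ≠ 0 := by omega
    simp [this]

omit hv in
lemma G0_swap : (Bivariate.swap (G0 q v r c)).natDegree ≤ q ^ r - 1 := by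
  have hq2 := hq2 hq he
  unfold G0
  rw [map_sum]
  apply natDegree_sum_le_of_forall_le
  intro i hi
  rw [map_mul, Bivariate.swap_C, Bivariate.swap_map_C]
  refine natDegree_mul_le.trans ?_
  rw [natDegree_C, add_zero]
  refine natDegree_map_le.trans ((natDegree_C_mul_X_pow_le _ _).trans ?_)
  have : 1 ≤ q ^ i := Nat.one_le_pow _ _ (by omega)
  omega

omit hv in
/-- simple roots -/
lemma PP_simple {j : ℕ} (hj : 1 ≤ j) {A B : L[X]} (hAB : A * B = PP L q j) {ω : L} (hA : A.eval ω = 0) :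
    B.eval ω ≠ 0 ∧ ω ^ q ≠ ω ∧ ω ^ q ^ j = ω := by
  have h := PP_mul (L := L) hq he j
  rw [← hAB] at h
  have hd := congrArg (fun P => eval ω (derivative P)) h
  have hq0 : (q : L) = 0 := by
    rw [hq, Nat.cast_pow, CharP.cast_eq_zero, zero_pow (by omega)]
  have hdX : derivative (X ^ q ^ j : L[X]) = 0 := by
    rw [derivative_X_pow, Nat.cast_pow, hq0, zero_pow (by omega)]; simp
  simp only [derivative_mul, derivative_sub, hdX] at hd
  simp [hA] at hd
  refine ⟨?_, ?_, ?_⟩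
  · intro hB; rw [hB] at hd; simp at hd
  · intro hB; rw [hB] at hd; simp at hd
  · have := congrArg (eval ω) h
    simp [hA] at this
    exact (sub_eq_zero.1 this.symm)

theorem G0_prime [IsAlgClosed L] (hr : 1 ≤ r) (hc : c r = 1)
    (hgcd : ∀ ω : L, (∀ i ≤ r, c i ≠ 0 → ω ^ q ^ (v + i) = ω) → ω ^ q = ω) :
    Prime (G0 q v r c) := by
  have hq2 := hq2 hq he
  obtain ⟨hmon, hdeg⟩ := G0_monic (L := L) hq he hv hc
  have hdpos : 0 < q ^ (v + r) - q := by
    have : q ^ 1 < q ^ (v + r) := Nat.pow_lt_pow_right (by omega) (by omega)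
    rw [pow_one] at this; omega
  rw [← UniqueFactorizationMonoid.irreducible_iff_prime, hmon.irreducible_iff_natDegree]
  refine ⟨fun h => by rw [h, natDegree_one] at hdeg; omega, ?_⟩
  intro A B hA hB hAB
  by_contra hcon
  push Not at hcon
  have key : ∀ A B : L[X][X], A.Monic → A * B = G0 q v r c → A.natDegree ≠ 0 →
      q ^ r - q ^ (r - 1) ≤ (Bivariate.swap A).natDegree := by
    intro A B hA hAB hA0
    obtain ⟨ω, hω⟩ := IsAlgClosed.exists_root (A.map (evalRingHom 0)) (by
      rw [hA.degree_map]
      intro h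
      exact hA0 (natDegree_eq_of_degree_eq_some h))
    have hAB0 := congrArg (Polynomial.map (evalRingHom (0 : L))) hAB
    rw [Polynomial.map_mul, G0_map0 hq he hc] at hAB0
    obtain ⟨h1, h2, h3⟩ := PP_simple hq he (by omega) hAB0 hω
    have hev := G0_evalC (L := L) (v := v) (r := r) (c := c) hq he ω
    rw [← hAB, eval_mul] at hev
    have hval : ∀ P : L[X][X], eval ω (P.map (evalRingHom 0)) = (eval (C ω) P).coeff 0 := by
      intro P
      rw [coeff_zero_eq_eval_zero, eval_C_eq_map_swap]
      have e1 : eval 0 (map (evalRingHom ω) (Bivariate.swap P)) = evalEval ω 0 (Bivariate.swap P) := by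
        rw [← map_evalRingHom_eval]
      have e2 : evalEval 0 ω P = evalEval ω 0 (Bivariate.swap P) := by
        rw [← e1, evalEval, eval_C_eq_map_swap]
      rw [e1, ← e2, ← map_evalRingHom_eval]
    set a := eval (C ω) A with ha
    set b := eval (C ω) B with hb
    have hXb : ¬ X ∣ b := by
      rw [X_dvd_iff, ← hval]; exact h1
    have hdvd : X ^ (q ^ r - q ^ (r - 1)) ∣ a := by
      have h4 : (X : L[X]) ^ (q ^ r - q ^ (r - 1)) ∣ a * b * C (ω ^ q - ω) := by
        rw [hev, Finset.sum_range_succ, h3]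
        simp only [sub_self, mul_zero, C_0, zero_mul, add_zero]
        apply Finset.dvd_sum
        intro i hi
        rw [Finset.mem_range] at hi
        apply Dvd.dvd.mul_left
        apply pow_dvd_pow
        have : q ^ i ≤ q ^ (r - 1) := Nat.pow_le_pow_right (by omega) (by omega)
        omega
      have h5 : IsUnit (C (ω ^ q - ω) : L[X]) := by
        rw [isUnit_C, isUnit_iff_ne_zero]; exact sub_ne_zero.2 h2
      have h6 := h5.dvd_mul_right.1 h4
      exact prime_X.pow_dvd_of_dvd_mul_right _ hXb h6
    have ha0 : a ≠ 0 := by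
      intro h0
      rw [h0, zero_mul, zero_mul] at hev
      apply h2
      apply hgcd
      intro i hi hci
      have h7 := congrArg (fun P => P.coeff (q ^ r - q ^ i)) hev
      simp only [coeff_zero, finsetSum_coeff, coeff_C_mul_X_pow] at h7
      rw [Finset.sum_eq_single i] at h7
      · rw [if_pos rfl] at h7
        exact sub_eq_zero.1 ((mul_eq_zero.1 h7.symm).resolve_left hci)
      · intro i' hi' hne
        rw [if_neg]
        intro h
        rw [Finset.mem_range] at hi'
        have e1 : q ^ i' ≤ q ^ r := Nat.pow_le_pow_right (by omega) (by omega)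
        have e2 : q ^ i ≤ q ^ r := Nat.pow_le_pow_right (by omega) hi
        have e3 : q ^ i' = q ^ i := by omega
        exact hne (Nat.pow_right_injective hq2 e3)
      · intro h; exact absurd (Finset.mem_range.2 (by omega)) h
    have h8 := natDegree_le_of_dvd hdvd ha0
    rw [natDegree_X_pow] at h8
    refine h8.trans ?_
    rw [ha, eval_C_eq_map_swap]
    exact natDegree_map_le
  have k1 := key A B hA hAB hcon.1
  have k2 := key B A hB (by rw [mul_comm]; exact hAB) hcon.2
  have k3 := G0_swap (L := L) (v := v) (r := r) (c := c) hq he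
  have hsA : Bivariate.swap A ≠ 0 := by
    rw [Ne, EmbeddingLike.map_eq_zero_iff]; exact hA.ne_zero
  have hsB : Bivariate.swap B ≠ 0 := by
    rw [Ne, EmbeddingLike.map_eq_zero_iff]; exact hB.ne_zero
  rw [← hAB, map_mul, natDegree_mul hsA hsB] at k3
  have k4 : q ^ r = q ^ (r - 1) * q := by rw [← pow_succ]; congr 1; omega
  have k5 : q ^ (r - 1) * 2 ≤ q ^ (r - 1) * q := Nat.mul_le_mul_left _ hq2
  have k6 : 1 ≤ q ^ (r - 1) := Nat.one_le_pow _ _ (by omega)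
  omega

theorem G0_hensel [IsAlgClosed L] (hr : 1 ≤ r) (hc : c r = 1) :
    ∃ T : PowerSeries L, ev T (G0 q v r c) = 0 := by
  have hq2 := hq2 hq he
  obtain ⟨hmon, hdeg⟩ := G0_monic (L := L) hq he hv hc
  have hPm := PP_monic (L := L) hq he (j := v + r) (by omega)
  have hdpos : 0 < q ^ (v + r) - q := by
    have : q ^ 1 < q ^ (v + r) := Nat.pow_lt_pow_right (by omega) (by omega)
    rw [pow_one] at this; omega
  obtain ⟨ω, hω⟩ := IsAlgClosed.exists_root (PP L q (v + r)) (by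
    rw [degree_eq_natDegree hPm.1.ne_zero, hPm.2]
    intro h
    norm_cast at h; omega)
  set φ : L[X] →+* PowerSeries L := coeToPowerSeries.ringHom with hφ
  have hφ0 : (PowerSeries.constantCoeff (R := L)).comp φ = evalRingHom 0 := by
    apply Polynomial.ringHom_ext
    · intro a; simp [hφ]
    · simp [hφ]
  have hcc : ∀ P : L[X][X], PowerSeries.constantCoeff (eval (PowerSeries.C ω) (P.map φ)) =
      eval ω (P.map (evalRingHom 0)) := by
    intro P
    rw [← hφ0, ← Polynomial.map_map, ← PowerSeries.constantCoeff_C ω, Polynomial.eval_map_apply]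
    simp
  have hI : ∀ x : PowerSeries L, x ∈ Ideal.span {(PowerSeries.X : PowerSeries L)} ↔ PowerSeries.constantCoeff x = 0 := by
    intro x
    rw [Ideal.mem_span_singleton, PowerSeries.X_dvd_iff]
  obtain ⟨T, hT, _⟩ := HenselianRing.is_henselian (I := Ideal.span {(PowerSeries.X : PowerSeries L)})
    ((G0 q v r c).map φ) (hmon.map φ) (PowerSeries.C ω) (by
      rw [hI, hcc, G0_map0 hq he hc]; exact hω) (by
      apply IsUnit.map
      rw [PowerSeries.isUnit_iff_constantCoeff, isUnit_iff_ne_zero, derivative_map, hcc,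
        ← derivative_map, G0_map0 hq he hc]
      intro h
      have hdvd := (dvd_iff_isRoot.2 hω)
      obtain ⟨Bq, hBq⟩ := hdvd
      have h1 := PP_simple hq he (j := v + r) (by omega) (A := X - C ω) (B := Bq) hBq.symm (ω := ω) (by simp)
      rw [hBq, derivative_mul] at h
      simp at h
      exact h1.1 h)
  refine ⟨T, ?_⟩
  rw [IsRoot, eval_map] at hT
  exact hT

end

end HW
end

section
open Polynomial

namespace HW

section
variable {L : Type*} [Field L] {p e q v r : ℕ} [Fact p.Prime] [CharP L p] {c : ℕ → L}

lemma G0_mapz (hq : q = p ^ e) (he : 1 ≤ e) (z : L) :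
    (G0 q v r c).map (evalRingHom z) * (X ^ q - X) =
      ∑ i ∈ Finset.range (r + 1), C (c i * z ^ (q ^ r - q ^ i)) * (X ^ q ^ (v + i) - X) := by
  unfold G0
  rw [Polynomial.map_sum, Finset.sum_mul]
  apply Finset.sum_congr rfl
  intro i _
  rw [Polynomial.map_mul, map_C, Polynomial.map_map]
  have : (evalRingHom z).comp C = RingHom.id L := by ext; simp
  rw [this, Polynomial.map_id, mul_assoc, PP_mul hq he]
  simp

lemma G0_sep (hq : q = p ^ e) (he : 1 ≤ e) (hv : 1 ≤ v) (z : L)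
    (hz : ∑ i ∈ Finset.range (r + 1), c i * z ^ (q ^ r - q ^ i) ≠ 0) :
    ((G0 q v r c).map (evalRingHom z) * (X ^ q - X)).Separable := by
  have hq0 : (q : L) = 0 := by
    rw [hq, Nat.cast_pow, CharP.cast_eq_zero, zero_pow (by omega)]
  rw [separable_def]
  have hder : derivative ((G0 q v r c).map (evalRingHom z) * (X ^ q - X)) =
      C (- ∑ i ∈ Finset.range (r + 1), c i * z ^ (q ^ r - q ^ i)) := by
    rw [G0_mapz hq he, derivative_sum, map_neg, map_sum, ← Finset.sum_neg_distrib]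
    apply Finset.sum_congr rfl
    intro i _
    rw [derivative_C_mul, derivative_sub, derivative_X_pow, Nat.cast_pow, hq0, zero_pow (by omega)]
    simp
  rw [hder]
  refine ⟨0, C (- ∑ i ∈ Finset.range (r + 1), c i * z ^ (q ^ r - q ^ i))⁻¹, ?_⟩
  rw [zero_mul, zero_add, ← C_mul, inv_mul_cancel₀ (neg_ne_zero.2 hz), C_1]

lemma G0_frob (hq : q = p ^ e) {m : ℕ} (hc : ∀ i, c i ^ p ^ m = c i) (z t : L)
    (hz : z ^ p ^ m = z) : evalEval z t (G0 q v r c) ^ p ^ m = evalEval z (t ^ p ^ m) (G0 q v r c) := by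
  have h : ∀ t, evalEval z t (G0 q v r c) = ∑ i ∈ Finset.range (r + 1), c i * z ^ (q ^ r - q ^ i) *
      ∑ j ∈ Finset.range (v + i), (t ^ q - t) ^ (q ^ j - 1) := by
    intro t
    unfold G0
    rw [evalEval_finsetSum]
    apply Finset.sum_congr rfl
    intro i _
    rw [evalEval_mul, evalEval_C]
    have h1 : evalEval z t ((PP L q (v + i)).map C) = eval t (PP L q (v + i)) := by
      rw [evalEval, eval_C_eq_map_swap, Bivariate.swap_map_C]; simp
    rw [h1, PP, eval_finsetSum]
    simp
  rw [h, h, sum_pow_char_pow]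
  apply Finset.sum_congr rfl
  intro i _
  rw [mul_pow, mul_pow, hc, sum_pow_char_pow, ← pow_mul, mul_comm _ (p ^ m), pow_mul, hz]
  congr 1
  apply Finset.sum_congr rfl
  intro j _
  rw [← pow_mul, mul_comm _ (p ^ m), pow_mul, sub_pow_char_pow, ← pow_mul, mul_comm q, pow_mul]

end

lemma mem_of_pow_card {K L : Type*} [Field K] [Fintype K] [Field L] [Algebra K L] {t : L}
    (ht : t ^ Fintype.card K = t) : ∃ x : K, algebraMap K L x = t := by
  classical
  have h1 : 1 < Fintype.card K := Fintype.one_lt_card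
  have hne := FiniteField.X_pow_card_sub_X_ne_zero L h1
  have hsub : Finset.univ.image (algebraMap K L) ⊆ (X ^ Fintype.card K - X : L[X]).roots.toFinset := by
    intro y hy
    obtain ⟨x, _, rfl⟩ := Finset.mem_image.1 hy
    rw [Multiset.mem_toFinset, mem_roots hne]
    simp [← map_pow, FiniteField.pow_card]
  have hcard : (X ^ Fintype.card K - X : L[X]).roots.toFinset.card ≤ (Finset.univ.image (algebraMap K L)).card := by
    rw [Finset.card_image_of_injective _ (algebraMap K L).injective, Finset.card_univ]
    refine (Multiset.toFinset_card_le _).trans ((card_roots' _).trans ?_)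
    rw [FiniteField.X_pow_card_sub_X_natDegree_eq L h1]
  have heq := Finset.eq_of_subset_of_card_le hsub hcard
  have : t ∈ (X ^ Fintype.card K - X : L[X]).roots.toFinset := by
    rw [Multiset.mem_toFinset, mem_roots hne]
    simp [ht]
  rw [← heq] at this
  obtain ⟨x, _, hx⟩ := Finset.mem_image.1 this
  exact ⟨x, hx⟩

/-- the affine points -/
noncomputable def pts {K : Type*} [Field K] [Fintype K] (q v r : ℕ) (c : ℕ → K) : Finset (K × K) := by
  classical
  exact Finset.univ.filter (fun x : K × K => (x.1 ≠ 0 ∧ ∑ i ∈ Finset.range (r + 1), c i * x.1 ^ (q ^ r - q ^ i) ≠ 0)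
    ∧ x.2 ^ q ≠ x.2 ∧ ∑ i ∈ Finset.range (r + 1), c i * x.1 ^ (q ^ r - q ^ i) * (x.2 ^ q ^ (v + i) - x.2) = 0)

noncomputable def good {K : Type*} [Field K] [Fintype K] (q r : ℕ) (c : ℕ → K) : Finset K := by
  classical
  exact Finset.univ.filter (fun x : K => x ≠ 0 ∧ ∑ i ∈ Finset.range (r + 1), c i * x ^ (q ^ r - q ^ i) ≠ 0)

theorem part_F {K : Type*} [Field K] [Fintype K] {p e q v r e1 e2 B α σ wA : ℕ} [Fact p.Prime] [CharP K p]
    (hq : q = p ^ e) (he : 1 ≤ e) (hv : 1 ≤ v) (hr : 1 ≤ r) (hcard : Fintype.card K = p ^ (e1 + e2))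
    {c : ℕ → K} (hc : c r = 1) (hgcd : ∀ g, (∀ i ≤ r, c i ≠ 0 → g ∣ v + i) → g = 1)
    {d lam : ℕ} (hd : d = q ^ (v + r) - q) (hlam : lam = q ^ v)
    (hσ : p ^ e1 = lam * σ) (hwA : wA + σ * (d - 1) = p ^ e1 * α + B)
    (hwd : d ≤ lam * wA + 1) (hα : d ≤ lam * α + 1)
    (hBs : B < p ^ e1) (hBd : d ≤ lam * B + 1)
    (hcount : ((α : ℤ) * d - ∑ j ∈ Finset.range d, ((j / lam : ℕ) : ℤ)) *
      ((p ^ e1 : ℕ) * d + (∑ l ∈ Finset.range d, (((l + lam - 1) / lam : ℕ) : ℤ)) - d * (B + 1))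
        < d * (wA + 1) - ∑ l ∈ Finset.range d, (((l + lam - 1) / lam : ℕ) : ℤ))
    (hs' : d * (α + 1) < p ^ e2) :
    d * (good q r c).card ≤ (pts q v r c).card + d * (α + 1 + p ^ e2 * B) := by
  classical
  have hq2 := hq2 hq he
  let L := AlgebraicClosure K
  have : CharP L p := charP_of_injective_algebraMap (algebraMap K L).injective p
  set ι := algebraMap K L with hι
  have hιinj : Function.Injective ι := ι.injective
  set c' : ℕ → L := fun i => ι (c i) with hc'
  have hc'r : c' r = 1 := by rw [hc']; simp [hc]
  have hlpos : 0 < lam := by rw [hlam]; exact pow_pos (by omega) _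
  have hd1 : 1 ≤ d := by
    have : q ^ 1 < q ^ (v + r) := Nat.pow_lt_pow_right (by omega) (by omega)
    rw [pow_one] at this; omega
  obtain ⟨hmon, hdeg⟩ := G0_monic (L := L) (c := c') hq he hv hc'r
  rw [← hd] at hdeg
  have hwt : G0 q v r c' ∈ Wt L lam d := by rw [hlam, hd]; exact G0_wt hq he hv
  have hprime : Prime (G0 q v r c') := by
    apply G0_prime hq he hv hr hc'r
    intro ω hω
    have hit : ∀ j, (fun x : L => x ^ q)^[j] ω = ω ^ q ^ j := fun j => by rw [pow_iterate]
    have h1 := hgcd (Function.minimalPeriod (fun x : L => x ^ q) ω) (by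
      intro i hi hci
      apply Function.IsPeriodicPt.minimalPeriod_dvd
      show (fun x : L => x ^ q)^[v + i] ω = ω
      rw [hit]
      apply hω i hi
      rw [hc']; simpa using hci)
    have h2 := Function.iterate_minimalPeriod (f := fun x : L => x ^ q) (x := ω)
    rw [h1, hit, pow_one] at h2
    exact h2
  obtain ⟨T, hT⟩ := G0_hensel (L := L) (c := c') hq he hv hr hc'r
  have hKQ : ∀ x : K, ι x ^ p ^ (e1 + e2) = ι x := by
    intro x; rw [← map_pow, ← hcard, FiniteField.pow_card]
  obtain ⟨H, hHw, hHG, hH⟩ := part_E (e1 := e1) (e2 := e2) (B := B) (α := α) (σ := σ) (wA := wA)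
    hlpos hmon hdeg hd1 hwt hprime hT hσ hwA (by
      intro z t hz ht
      rw [← G0_frob hq (fun i => hKQ (c i)) z t hz, ht, zero_pow]
      exact (pow_pos (Fact.out : p.Prime).pos _).ne') hwd hα hBs hBd hcount hs'
  -- roots
  set Rt : K → Finset L := fun z => ((G0 q v r c').map (evalRingHom (ι z))).roots.toFinset with hRt
  have hRtmem : ∀ z t, t ∈ Rt z ↔ evalEval (ι z) t (G0 q v r c') = 0 := by
    intro z t
    rw [hRt, Multiset.mem_toFinset, mem_roots (hmon.map _).ne_zero, IsRoot, map_evalRingHom_eval]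
  have hgood : ∀ z, z ∈ good q r c ↔ z ≠ 0 ∧ ∑ i ∈ Finset.range (r + 1), c i * z ^ (q ^ r - q ^ i) ≠ 0 := by
    intro z; simp [good]
  have hsep : ∀ z ∈ good q r c, ((G0 q v r c').map (evalRingHom (ι z)) * (X ^ q - X)).Separable := by
    intro z hz
    rw [hgood] at hz
    apply G0_sep hq he hv
    intro h
    apply hz.2
    apply hιinj
    rw [map_zero, ← h, map_sum]
    simp [hc']
  have hRtcard : ∀ z ∈ good q r c, (Rt z).card = d := by
    intro z hz
    have h1 := (hsep z hz).of_mul_left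
    rw [hRt]
    simp only
    rw [Multiset.toFinset_card_of_nodup (nodup_roots h1), ← (IsAlgClosed.splits _).natDegree_eq_card_roots,
      hmon.natDegree_map, hdeg]
  have hRtq : ∀ z ∈ good q r c, ∀ t ∈ Rt z, t ^ q ≠ t := by
    intro z hz t ht h
    have h1 := (hsep z hz).squarefree
    have hd1' : (X - C t) ∣ (G0 q v r c').map (evalRingHom (ι z)) := by
      rw [dvd_iff_isRoot]
      rw [hRt, Multiset.mem_toFinset, mem_roots (hmon.map _).ne_zero] at ht
      exact ht
    have hd2' : (X - C t) ∣ (X ^ q - X : L[X]) := by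
      rw [dvd_iff_isRoot]; simp [h]
    exact not_isUnit_X_sub_C t (h1 _ (mul_dvd_mul hd1' hd2'))
  set All : Finset (Σ _ : K, L) := (good q r c).sigma Rt with hAll
  have hAllcard : All.card = d * (good q r c).card := by
    rw [hAll, Finset.card_sigma, Finset.sum_congr rfl hRtcard]; simp [mul_comm]
  rw [← hAllcard, ← Finset.card_filter_add_card_filter_not (s := All) (fun x => x.2 ^ p ^ (e1 + e2) = x.2)]
  apply Nat.add_le_add
  · -- rational ones
    have hch : ∀ x ∈ All.filter (fun x => x.2 ^ p ^ (e1 + e2) = x.2), ∃ y : K, ι y = x.2 := by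
      intro x hx
      rw [Finset.mem_filter, ← hcard] at hx
      exact mem_of_pow_card hx.2
    have hsub : All.filter (fun x => x.2 ^ p ^ (e1 + e2) = x.2) ⊆
        (pts q v r c).image (fun x => (⟨x.1, ι x.2⟩ : Σ _ : K, L)) := by
      intro x hx
      obtain ⟨y, hy⟩ := hch x hx
      obtain ⟨z, t⟩ := x
      rw [Finset.mem_filter, hAll, Finset.mem_sigma] at hx
      obtain ⟨⟨hz, ht⟩, _⟩ := hx
      simp only at hy hz ht
      rw [Finset.mem_image]
      refine ⟨(z, y), ?_, by simp [hy]⟩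
      have htq := hRtq z hz t ht
      rw [hRtmem] at ht
      have hgz := (hgood z).1 hz
      rw [pts, Finset.mem_filter]
      refine ⟨Finset.mem_univ _, hgz, ?_, ?_⟩
      · intro h
        apply htq
        simp only at h
        rw [← hy, ← map_pow, h]
      · have h1 := G0_eval (L := L) (v := v) (r := r) (c := c') hq he (ι z) t
        rw [ht, zero_mul] at h1
        apply hιinj
        rw [map_zero, h1, map_sum, ← hy]
        simp [hc']
    exact (Finset.card_le_card hsub).trans Finset.card_image_le
  · rw [← Finset.card_image_of_injOn (s := All.filter (fun x => ¬ x.2 ^ p ^ (e1 + e2) = x.2))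
      (f := fun x : (Σ _ : K, L) => (ι x.1, x.2))]
    · apply part_C hlpos hmon hdeg hwt hprime hHw hHG
      · intro x hx
        obtain ⟨⟨z, t⟩, hy, rfl⟩ := Finset.mem_image.1 hx
        rw [Finset.mem_filter, hAll, Finset.mem_sigma] at hy
        exact (hRtmem _ _).1 hy.1.2
      · intro x hx
        obtain ⟨⟨z, t⟩, hy, rfl⟩ := Finset.mem_image.1 hx
        rw [Finset.mem_filter, hAll, Finset.mem_sigma] at hy
        exact hH _ _ (hKQ z) ((hRtmem _ _).1 hy.1.2) hy.2
    · rintro ⟨z, t⟩ _ ⟨z', t'⟩ _ h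
      simp only [Prod.mk.injEq] at h
      obtain ⟨h1, rfl⟩ := h
      rw [hιinj h1]

end HW
end

section
open Polynomial
namespace HW

lemma sum_div (lam m r : ℕ) (hl : 0 < lam) (hr : r ≤ lam) :
    2 * ∑ j ∈ Finset.range (lam * m + r), (((j / lam : ℕ)) : ℤ) = lam * m * (m - 1) + 2 * r * m := by
  have key : ∀ m r : ℕ, r ≤ lam → ∑ j ∈ Finset.range (lam * m + r), (((j / lam : ℕ)) : ℤ) =
      ∑ j ∈ Finset.range (lam * m), (((j / lam : ℕ)) : ℤ) + r * m := by
    intro m r hr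
    rw [Finset.sum_range_add]
    congr 1
    rw [Finset.sum_congr rfl (g := fun _ => (m : ℤ))]
    · simp
    · intro x hx
      have := Finset.mem_range.1 hx
      rw [Nat.mul_add_div hl, Nat.div_eq_of_lt (by omega)]; simp
  have base : ∀ m : ℕ, 2 * ∑ j ∈ Finset.range (lam * m), (((j / lam : ℕ)) : ℤ) = lam * m * (m - 1) := by
    intro m
    induction m with
    | zero => simp
    | succ m ih =>
      rw [Nat.mul_succ, key m lam le_rfl, mul_add, ih]; push_cast; ring
  rw [key m r hr, mul_add, base]; ring

lemma sum_F {lam rho q d : ℕ} (hq : q ≤ lam) (hq1 : 1 ≤ q) (hr : 1 ≤ rho) (hd : d + q = lam * rho) :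
    2 * ∑ j ∈ Finset.range d, (((j / lam : ℕ)) : ℤ) = (rho - 1) * (lam * rho - 2 * q) := by
  obtain ⟨m, rfl⟩ : ∃ m, rho = m + 1 := ⟨rho - 1, by omega⟩
  have : d = lam * m + (lam - q) := by rw [Nat.mul_succ] at hd; omega
  rw [this, sum_div lam m _ (by omega) (by omega)]
  push_cast [hq]; ring

lemma sum_C {lam rho q d : ℕ} (hq : q ≤ lam) (hq1 : 1 ≤ q) (hr : 1 ≤ rho) (hd : d + q = lam * rho) (hd1 : 1 ≤ d) :
    ∑ l ∈ Finset.range d, (((l + lam - 1) / lam : ℕ) : ℤ) ≤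
      ∑ j ∈ Finset.range d, (((j / lam : ℕ)) : ℤ) - rho + 1 + d := by
  obtain ⟨D, rfl⟩ : ∃ D, d = D + 1 := ⟨d - 1, by omega⟩
  rw [Finset.sum_range_succ', Finset.sum_range_succ]
  have h1 : ∀ l, (((l + 1 + lam - 1) / lam : ℕ) : ℤ) = (((l / lam : ℕ)) : ℤ) + 1 := by
    intro l
    rw [show l + 1 + lam - 1 = l + lam by omega, Nat.add_div_right _ (by omega)]; simp
  have h0 : (0 + lam - 1) / lam = 0 := Nat.div_eq_of_lt (by omega)
  rw [Finset.sum_congr rfl (fun l _ => h1 l), h0, Finset.sum_add_distrib]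
  obtain ⟨m, rfl⟩ : ∃ m, rho = m + 1 := ⟨rho - 1, by omega⟩
  have h2 : m ≤ D / lam + 1 := by
    rcases m with _ | m
    · exact Nat.zero_le _
    have : m ≤ D / lam := by
      rw [Nat.le_div_iff_mul_le (by omega)]
      have : lam * (m + 1 + 1) = m * lam + 2 * lam := by ring
      omega
    omega
  have h3 : (m : ℤ) ≤ ((D / lam : ℕ) : ℤ) + 1 := by exact_mod_cast h2
  simp only [Finset.sum_const, Finset.card_range, nsmul_eq_mul, mul_one]
  push_cast at h3 ⊢
  linarith

/-- numeric choice of parameters -/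
lemma num {p e1 e2 lam d T : ℕ} {F C c : ℤ} {α σ : ℕ}
    (hd1 : 4 ≤ d) (hl : 2 ≤ lam)
    (hσ : p ^ e1 = lam * σ) (hs1 : 1 ≤ p ^ e1)
    (hα : d ≤ lam * α + 1) (hα1 : α + 1 = (p ^ e2 - 1) / d)
    (hA : (T : ℤ) = 1 + α * d - F) (hT : 1 ≤ T)
    (hC : C ≤ d + c) (hc : 0 ≤ c)
    (hΓ : (d : ℤ) * (d - 1) ≤ lam * (F + d + c))
    (hss : d ≤ lam * p ^ e1)
    (hBlt : (T : ℤ) * (c + d + 1) + p ^ e1 * (c + 1) ≤ p ^ e1 * T) :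
    ∃ B wA : ℕ, wA + σ * (d - 1) = p ^ e1 * α + B ∧ d ≤ lam * wA + 1 ∧ B < p ^ e1 ∧ d ≤ lam * B + 1 ∧
      ((α : ℤ) * d - F) * ((p ^ e1 : ℕ) * d + C - d * (B + 1)) < d * (wA + 1) - C ∧
      d * (α + 1) < p ^ e2 ∧ (T : ℤ) * (d * B) ≤ T * (c + p ^ e1 * (d - 1) + d) + p ^ e1 * (c + 1) := by
  set s := p ^ e1 with hs
  have hsz : ((p : ℤ) ^ e1) = (s : ℤ) := by rw [hs]; push_cast; rfl
  rw [hsz] at hBlt ⊢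
  have hdT : 0 < (d : ℤ) * T := by positivity
  obtain ⟨B0, hB0⟩ : ∃ B0 : ℤ, B0 = (T * (c + s * (d - 1)) + s * (c + 1)) / (d * T) := ⟨_, rfl⟩
  have hB1 : (d * T : ℤ) * B0 ≤ T * (c + s * (d - 1)) + s * (c + 1) := by
    rw [hB0]; exact Int.mul_ediv_self_le (ne_of_gt hdT)
  have hB2 : T * (c + s * (d - 1)) + s * (c + 1) < (d * T : ℤ) * B0 + d * T := by
    rw [hB0]; exact Int.lt_mul_ediv_self_add hdT
  have hdz : (4 : ℤ) ≤ d := by exact_mod_cast hd1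
  have hTz : (1 : ℤ) ≤ T := by exact_mod_cast hT
  have hsz1 : (1 : ℤ) ≤ s := by exact_mod_cast hs1
  have hB00 : 0 ≤ B0 := by
    rw [hB0]; apply Int.ediv_nonneg _ hdT.le
    have : (0 : ℤ) ≤ s * (d - 1) := mul_nonneg (by linarith) (by linarith)
    have : (0 : ℤ) ≤ s * (c + 1) := mul_nonneg (by linarith) (by linarith)
    have : 0 ≤ T * (c + s * (d - 1)) := mul_nonneg (by linarith) (by linarith)
    linarith
  obtain ⟨B', hB'⟩ : ∃ B' : ℕ, B0 = B' := ⟨B0.toNat, (Int.toNat_of_nonneg hB00).symm⟩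
  subst hB'
  obtain ⟨B, hB⟩ : ∃ B, B = B' + 1 := ⟨_, rfl⟩
  have hBz : (B : ℤ) = B' + 1 := by rw [hB]; push_cast; ring
  -- main lower bound
  have hX : s * (c + 1) < T * (d * B - c - s * (d - 1)) := by rw [hBz]; linarith
  have hX0 : (s : ℤ) * (d - 1) < d * B := by
    have h1 : 0 < T * (d * B - c - s * (d - 1) : ℤ) := lt_of_le_of_lt (by positivity) hX
    have := (mul_pos_iff_of_pos_left (show (0:ℤ) < T by linarith)).1 h1
    linarith
  have hσα : σ * (d - 1) ≤ s * α := by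
    have : lam * (σ * (d - 1)) ≤ lam * (s * α) := by
      calc lam * (σ * (d - 1)) = s * (d - 1) := by rw [hσ]; ring
        _ ≤ s * (lam * α) := Nat.mul_le_mul_left _ (by omega)
        _ = _ := by ring
    exact Nat.le_of_mul_le_mul_left this (by omega)
  have hBd : d ≤ lam * B + 1 := by
    have h1 : d * (d - 1 : ℤ) < d * (lam * B) := by
      have h2 : (d : ℤ) ≤ lam * s := by exact_mod_cast hss
      have h3 : (d : ℤ) * (d - 1) ≤ lam * s * (d - 1) := mul_le_mul_of_nonneg_right h2 (by linarith)
      have h4 : (lam : ℤ) * (s * (d - 1)) < lam * (d * B) := mul_lt_mul_of_pos_left hX0 (by positivity)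
      linarith
    have := lt_of_mul_lt_mul_left h1 (by positivity)
    have : (d : ℤ) < lam * B + 1 := by linarith
    exact_mod_cast this.le
  have hBs : B < s := by
    have h1 : (d * T : ℤ) * B < d * T * s := by
      rw [hBz]
      have : (0:ℤ) < T := by linarith
      linarith
    exact_mod_cast lt_of_mul_lt_mul_left h1 hdT.le
  refine ⟨B, s * α + B - σ * (d - 1), by omega, ?_, hBs, hBd, ?_, ?_, ?_⟩
  · have : lam * B ≤ lam * (s * α + B - σ * (d - 1)) := Nat.mul_le_mul_left _ (by omega)
    omega
  · have hw : ((s * α + B - σ * (d - 1) : ℕ) : ℤ) = s * α + B - σ * (d - 1) := by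
      push_cast [show σ * (d - 1) ≤ s * α + B by omega, show 1 ≤ d by omega]; ring
    rw [hw]
    have hAz : (α : ℤ) * d - F = T - 1 := by linarith
    rw [hAz]
    have h1 : (T - 1 : ℤ) * (s * d + C - d * (B + 1)) ≤ (T - 1) * (s * d + (d + c) - d * (B + 1)) :=
      mul_le_mul_of_nonneg_left (by linarith) (by linarith)
    have h2 : (σ : ℤ) * (d * (d - 1)) ≤ s * (F + d + c) := by
      have hsl : (s : ℤ) = lam * σ := by exact_mod_cast hσ
      rw [hsl]
      have := mul_le_mul_of_nonneg_left hΓ (show (0:ℤ) ≤ σ by positivity)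
      linarith
    have h3 : (s : ℤ) * α * d = s * (T - 1 + F) := by rw [← hAz]; ring
    refine lt_of_le_of_lt h1 ?_
    have h4 : (d : ℤ) * (s * α + B - σ * (d - 1) + 1) - C ≥ s * (T - 1 + F) + d * B - s * (F + d + c) - c := by
      linarith
    refine lt_of_lt_of_le ?_ h4
    linarith
  · rw [hα1]
    have : 1 ≤ p ^ e2 := by
      by_contra h
      have : p ^ e2 = 0 := by omega
      rw [this] at hα1; simp at hα1
    have := Nat.mul_div_le (p ^ e2 - 1) d
    omega
  · rw [hBz]; linarith

end HW
end

section
open Polynomial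
namespace HW

theorem part_H2 {K : Type*} [Field K] [Fintype K] {p e q v r e1 e2 α T κ d : ℕ} [Fact p.Prime] [CharP K p]
    (hq : q = p ^ e) (he : 1 ≤ e) (hv : 1 ≤ v) (hr : 1 ≤ r) (hcard : Fintype.card K = p ^ (e1 + e2))
    {c : ℕ → K} (hc : c r = 1) (hgcd : ∀ g, (∀ i ≤ r, c i ≠ 0 → g ∣ v + i) → g = 1)
    (hd : d = q ^ (v + r) - q) {F : ℤ} (hF : 2 * F = ((q ^ r : ℕ) - 1) * ((q ^ (v + r) : ℕ) - 2 * q))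
    (hc0 : ((q ^ r : ℕ) : ℤ) ≤ F + 1)
    (hs : q ^ v ∣ p ^ e1) (hα : d ≤ q ^ v * α + 1) (hα1 : α + 1 = (p ^ e2 - 1) / d)
    (hA : (T : ℤ) = 1 + α * d - F) (hT : 1 ≤ T) (hd4 : 4 ≤ d)
    (hss : d ≤ q ^ v * p ^ e1) {R E : ℝ} (hR0 : 0 ≤ R) (hR : R ^ 2 = (p : ℝ) ^ e1 * (p : ℝ) ^ e2) (hE : E ≤ R)
    (hκ : p ^ (e1 + e2) ≤ (good q r c).card + κ) (hκρ : κ ≤ q ^ r)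
    (hsm : (2 : ℝ) * q ^ r + q ^ (v + r) ≤ (q ^ (v + r) - 1) * q ^ r)
    (hI : (T : ℝ) * ((p : ℝ) ^ e2 * (F - q ^ r + 1 + d + 1)) + (p : ℝ) ^ e1 * (p : ℝ) ^ e2 * (F - q ^ r + 1 + 1)
      + T * ((q ^ (v + r) - 1) * q ^ r) ≤ T * (E * R + 2 * q ^ r + q ^ (v + r))) :
    (p : ℝ) ^ (e1 + e2) - E * R - 2 * q ^ r - q ^ (v + r) + (q - 1) * κ + 1 ≤ ((pts q v r c).card : ℝ) := by
  have hq2 := hq2 (p := p) hq he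
  have hp1 : 1 ≤ p := (Fact.out : p.Prime).one_lt.le
  have hlq : q ≤ q ^ v := Nat.le_self_pow (by omega) q
  have hρ1 : 1 ≤ q ^ r := Nat.one_le_pow _ _ (by omega)
  have hDd : d + q = q ^ v * q ^ r := by
    have : q ≤ q ^ (v + r) := Nat.le_self_pow (by omega) q
    rw [hd, ← pow_add]; omega
  have hFF : F = ∑ j ∈ Finset.range d, (((j / q ^ v : ℕ)) : ℤ) := by
    have := sum_F hlq (by omega) hρ1 hDd
    rw [pow_add] at hF
    push_cast at hF this ⊢
    linarith
  have hCC := sum_C hlq (by omega) hρ1 hDd (by omega)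
  rw [← hFF] at hCC
  obtain ⟨σ, hσ⟩ := hs
  have hΓ : (d : ℤ) * (d - 1) ≤ (q ^ v : ℕ) * (F + d + (F - (q ^ r : ℕ) + 1)) := by
    have hD : (d : ℤ) + q = (q ^ v : ℕ) * (q ^ r : ℕ) := by exact_mod_cast hDd
    have hlq' : (q : ℤ) ≤ (q ^ v : ℕ) := by exact_mod_cast hlq
    rw [pow_add] at hF
    generalize q ^ r = ρ at *
    generalize q ^ v = l at *
    push_cast at hF
    rw [← hD] at hF
    have h1 : F + d + (F - ρ + 1) = ρ * (d - q - 1) + (q + 1) := by linarith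
    rw [h1]
    have h2 : (l : ℤ) * (ρ * (d - q - 1) + (q + 1)) = (d + q) * (d - q - 1) + l * (q + 1) := by rw [hD]; ring
    rw [h2]
    nlinarith
  have hs0 : (0 : ℝ) < (p : ℝ) ^ e1 := by positivity
  have hs0' : (0 : ℝ) < (p : ℝ) ^ e2 := by positivity
  have hT0 : (1 : ℝ) ≤ T := by exact_mod_cast hT
  have hBlt : (T : ℤ) * ((F - (q ^ r : ℕ) + 1) + d + 1) + p ^ e1 * ((F - (q ^ r : ℕ) + 1) + 1) ≤ p ^ e1 * T := by
    have : (T : ℝ) * ((F - (q ^ r : ℕ) + 1) + d + 1) + p ^ e1 * ((F - (q ^ r : ℕ) + 1) + 1) ≤ p ^ e1 * T := by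
      have h1 : (p : ℝ) ^ e2 * ((T : ℝ) * ((F - (q ^ r : ℕ) + 1) + d + 1) + p ^ e1 * ((F - (q ^ r : ℕ) + 1) + 1)) ≤
          (p : ℝ) ^ e2 * (p ^ e1 * T) := by
        have h2 : T * ((2 : ℝ) * q ^ r + q ^ (v + r)) ≤ T * ((q ^ (v + r) - 1) * q ^ r) :=
          mul_le_mul_of_nonneg_left hsm (by linarith)
        have h3 : E * R ≤ R * R := mul_le_mul_of_nonneg_right hE hR0
        have h4 : T * (E * R) ≤ T * (R * R) := mul_le_mul_of_nonneg_left h3 (by linarith)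
        have h5 : R * R = (p : ℝ) ^ e1 * (p : ℝ) ^ e2 := by rw [← hR]; ring
        rw [h5] at h4
        push_cast
        linarith
      exact le_of_mul_le_mul_left h1 hs0'
    exact_mod_cast this
  obtain ⟨B, wA, h1, h2, h3, h4, h5, h6, h7⟩ := num (p := p) (e1 := e1) (e2 := e2) (lam := q ^ v) (d := d)
    (T := T) (F := F) (C := ∑ l ∈ Finset.range d, (((l + q ^ v - 1) / q ^ v : ℕ) : ℤ))
    (c := F - (q ^ r : ℕ) + 1) (α := α) (σ := σ) hd4 (by omega) hσ (Nat.one_le_pow _ _ hp1) hα hα1 hA hT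
    (by linarith) (by linarith) hΓ hss hBlt
  rw [hFF] at h5
  have h8 := part_F hq he hv hr hcard hc hgcd hd rfl hσ h1 h2 hα h3 h4 h5 h6
  set g := (good q r c).card
  set P := (pts q v r c).card
  have h8' : (d : ℝ) * g ≤ P + d * (α + 1) + p ^ e2 * (d * B) := by
    have : (d : ℝ) * g ≤ P + d * (α + 1 + p ^ e2 * B) := by exact_mod_cast h8
    linarith
  have h6' : (d : ℝ) * (α + 1) + 1 ≤ p ^ e2 := by exact_mod_cast h6
  have h7' : (T : ℝ) * (d * B) ≤ T * (F - q ^ r + 1 + p ^ e1 * (d - 1) + d) + p ^ e1 * (F - q ^ r + 1 + 1) := by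
    exact_mod_cast h7
  have hκ' : (p : ℝ) ^ e1 * p ^ e2 ≤ g + κ := by rw [← pow_add]; exact_mod_cast hκ
  have hκρ' : (κ : ℝ) ≤ q ^ r := by exact_mod_cast hκρ
  have hDd' : (q : ℝ) ^ (v + r) = d + q := by rw [pow_add]; exact_mod_cast hDd.symm
  rw [hDd'] at hI hsm ⊢
  rw [pow_add]
  generalize (q : ℝ) ^ r = ρ at *
  generalize (p : ℝ) ^ e1 = s at *
  generalize (p : ℝ) ^ e2 = s' at *
  have hq2' : (2 : ℝ) ≤ q := by exact_mod_cast hq2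
  have hd0 : (0 : ℝ) ≤ d := by positivity
  have k1 := mul_le_mul_of_nonneg_left h7' hs0'.le
  have k2 := mul_le_mul_of_nonneg_left h8' (show (0 : ℝ) ≤ T by linarith)
  have k3 := mul_le_mul_of_nonneg_left h6' (show (0 : ℝ) ≤ T by linarith)
  have k4 := mul_le_mul_of_nonneg_left (mul_le_mul_of_nonneg_left hκ' hd0) (show (0 : ℝ) ≤ T by linarith)
  have k5 : (T : ℝ) * ((d + q - 1) * κ) ≤ T * ((d + q - 1) * ρ) :=
    mul_le_mul_of_nonneg_left (mul_le_mul_of_nonneg_left hκρ' (by linarith)) (by linarith)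
  refine le_of_mul_le_mul_left (a := (T : ℝ)) ?_ (by linarith)
  linarith

end HW
end

section
open Polynomial
namespace HW

lemma gam {d q l ρ : ℕ} {F : ℤ} (hlq : q ≤ l) (hDd : d + q = l * ρ)
    (hF : 2 * F = ((ρ : ℕ) - 1) * ((l * ρ : ℕ) - 2 * q)) :
    (d : ℤ) * (d - 1) ≤ (l : ℕ) * (F + d + (F - (ρ : ℕ) + 1)) := by
  have hD : (d : ℤ) + q = l * ρ := by exact_mod_cast hDd
  have hlq' : (q : ℤ) ≤ l := by exact_mod_cast hlq
  push_cast at hF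
  rw [← hD] at hF
  have h1 : F + d + (F - ρ + 1) = ρ * (d - q - 1) + (q + 1) := by linarith
  rw [h1]
  have h2 : (l : ℤ) * (ρ * (d - q - 1) + (q + 1)) = (d + q) * (d - q - 1) + l * (q + 1) := by rw [hD]; ring
  rw [h2]
  have h3 : (q : ℤ) * (q + 1) ≤ l * (q + 1) := mul_le_mul_of_nonneg_right hlq' (by positivity)
  linarith

theorem part_H3 {K : Type*} [Field K] [Fintype K] {p e q v r m e1 e2 κ d : ℕ} [Fact p.Prime] [CharP K p]
    (hq : q = p ^ e) (he : 1 ≤ e) (hv : 1 ≤ v) (hr : 1 ≤ r) (hcard : Fintype.card K = p ^ m)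
    {c : ℕ → K} (hc : c r = 1) (hgcd : ∀ g, (∀ i ≤ r, c i ≠ 0 → g ∣ v + i) → g = 1)
    (hd : d = q ^ (v + r) - q) {F : ℤ} (hF : 2 * F = ((q ^ r : ℕ) - 1) * ((q ^ (v + r) : ℕ) - 2 * q))
    (he12 : e1 + e2 = m) (he1 : e1 ≤ e2) (he2 : e2 ≤ e1 + 1)
    (hD8 : 8 ≤ q ^ (v + r))
    {R E : ℝ} (hR0 : 0 ≤ R) (hR : R ^ 2 = (p : ℝ) ^ m) (hE : E < R) (hEd : E = ((d : ℝ) - 1) * (d - 2))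
    (hκ : p ^ m ≤ (good q r c).card + κ) (hκρ : κ ≤ q ^ r)
    (hb : 3 * d + 2 * F - (q ^ r : ℕ) + 1 ≤ (p ^ e2 : ℕ))
    (hI : ∀ T : ℤ, T = 1 + (((p ^ e2 - 1) / d - 1 : ℕ) : ℤ) * d - F → (p ^ e2 : ℕ) - (2 * d + F - 1) ≤ T → 1 ≤ T ∧
     (T : ℝ) * ((p : ℝ) ^ e2 * (F - q ^ r + 1 + d + 1)) + (p : ℝ) ^ e1 * (p : ℝ) ^ e2 * (F - q ^ r + 1 + 1)
      + T * ((q ^ (v + r) - 1) * q ^ r) ≤ T * (E * R + 2 * q ^ r + q ^ (v + r))) :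
    (p : ℝ) ^ m - E * R - 2 * q ^ r - q ^ (v + r) + (q - 1) * κ + 1 ≤ ((pts q v r c).card : ℝ) := by
  subst he12
  have hq2 := hq2 (p := p) hq he
  have hp1 : 1 < p := (Fact.out : p.Prime).one_lt
  have hlq : q ≤ q ^ v := Nat.le_self_pow (by omega) q
  have hrq : q ≤ q ^ r := Nat.le_self_pow (by omega) q
  have hDd : d + q = q ^ v * q ^ r := by
    have : q ≤ q ^ (v + r) := Nat.le_self_pow (by omega) q
    rw [hd, ← pow_add]; omega
  have hqq : q * q ≤ d + q := by rw [hDd]; exact Nat.mul_le_mul hlq hrq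
  have hlr2 : 2 * q ^ v ≤ d + q := by
    rw [hDd, mul_comm]; exact Nat.mul_le_mul_left _ (by omega)
  have hDq : q ^ (v + r) = d + q := by rw [hDd, pow_add]
  have h2q : 2 * q + 2 ≤ d + q := by
    rcases Nat.lt_or_ge q 4 with h | h
    · interval_cases q
      · omega
      · rw [hDq] at hD8; omega
    · have := Nat.mul_le_mul_right q h; omega
  have hd4 : 4 ≤ d := by omega
  have hds : d + 2 < p ^ e2 := by
    have h1 : (d : ℝ) + 2 ≤ E := by
      rw [hEd]
      have : (4 : ℝ) ≤ d := by exact_mod_cast hd4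
      nlinarith only [this]
    have h2 : R ≤ (p : ℝ) ^ e2 := by
      apply le_of_sq_le_sq _ (by positivity)
      rw [hR, ← pow_mul]
      apply pow_le_pow_right₀ (by exact_mod_cast hp1.le); omega
    have : (d : ℝ) + 2 < (p : ℝ) ^ e2 := by linarith
    exact_mod_cast this
  have hss' : p ^ e2 ≤ p * p ^ e1 := by
    rw [← pow_succ']; exact Nat.pow_le_pow_right hp1.le he2
  have hpq : p ≤ q := by rw [hq]; exact Nat.le_self_pow (by omega) p
  have hlr : q ^ v ≤ d := by omega
  set α := (p ^ e2 - 1) / d - 1 with hαdef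
  have hdiv1 : 1 ≤ (p ^ e2 - 1) / d := by rw [Nat.le_div_iff_mul_le (by omega)]; omega
  have hα1 : α + 1 = (p ^ e2 - 1) / d := by omega
  have hαd : p ^ e2 ≤ α * d + 2 * d := by
    have := Nat.lt_mul_div_succ (p ^ e2 - 1) (show 0 < d by omega)
    rw [← hα1] at this
    have h3 : d * (α + 1 + 1) = α * d + 2 * d := by ring
    omega
  have hαdz : ((p ^ e2 : ℕ) : ℤ) ≤ α * d + 2 * d := by exact_mod_cast hαd
  obtain ⟨hT1, hI'⟩ := hI _ rfl (by linarith)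
  obtain ⟨T, hT⟩ : ∃ T : ℕ, (T : ℤ) = 1 + α * d - F := ⟨(1 + α * d - F).toNat, Int.toNat_of_nonneg (by linarith)⟩
  rw [← hT] at hT1 hI'
  have hΓ : (d : ℤ) * (d - 1) ≤ (q ^ v : ℕ) * (F + d + (F - (q ^ r : ℕ) + 1)) :=
    gam hlq hDd (by rw [hF, pow_add])
  refine part_H2 (T := T) (α := α) (F := F) hq he hv hr hcard hc hgcd hd hF ?_ ?_ ?_ hα1 hT (by exact_mod_cast hT1) hd4 ?_ hR0
    (by rw [hR, pow_add]) hE.le hκ hκρ ?_ (by exact_mod_cast hI')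
  · have h1 : (2 : ℤ) ≤ (q ^ (v + r) : ℕ) - 2 * q := by rw [hDq]; push_cast; linarith [show (2 * q + 2 : ℤ) ≤ d + q by exact_mod_cast h2q]
    have h2 : (1 : ℤ) ≤ (q ^ r : ℕ) := by exact_mod_cast (show 1 ≤ q ^ r by omega)
    have h3 := mul_le_mul_of_nonneg_left h1 (sub_nonneg.2 h2)
    rw [← hF] at h3
    linarith only [h3]
  · rw [hq, ← pow_mul]
    apply pow_dvd_pow
    have : p ^ (e * v) < p ^ (e1 + 1) := by
      rw [pow_mul, ← hq, pow_succ']; omega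
    have := (Nat.pow_lt_pow_iff_right hp1).1 this
    omega
  · have h1 : (d : ℤ) * (d - 1) ≤ (q ^ v : ℕ) * (d * α) := by
      refine hΓ.trans (mul_le_mul_of_nonneg_left ?_ (by positivity))
      linarith
    have h2 : (d : ℤ) * (d - 1) ≤ d * ((q ^ v : ℕ) * α) := by linarith
    have h3 := le_of_mul_le_mul_left h2 (by exact_mod_cast (show 0 < d by omega))
    have : (d : ℤ) ≤ (q ^ v : ℕ) * α + 1 := by linarith
    exact_mod_cast this
  · calc d ≤ p ^ e2 := by omega
      _ ≤ p * p ^ e1 := hss'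
      _ ≤ _ := Nat.mul_le_mul_right _ (by omega)
  · have h1 : (8 : ℝ) ≤ q ^ (v + r) := by exact_mod_cast hD8
    have h2 : (2 : ℝ) ≤ q ^ r := by exact_mod_cast (show 2 ≤ q ^ r by omega)
    nlinarith only [h1, h2]

lemma arith {R s s' X θ ε d F ρ D E T : ℝ} (hR : 0 < R) (hss : s * s' = R ^ 2) (h1 : R ≤ s') (h2 : s' ≤ X * R)
    (hT : s' - (2 * d + F - 1) ≤ T) (hW : 2 * d + F - 1 ≤ θ * R) (hθ : θ < 1) (hc : 0 ≤ F - ρ + 2) (hd : 0 ≤ d)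
    (hmain : X * (F - ρ + 2 + d) + (F - ρ + 2) / (1 - θ) + ε ≤ E)
    (hε : (D - 1) * ρ - 2 * ρ - D ≤ ε * R) : 0 < T ∧
    T * (s' * (F - ρ + 1 + d + 1)) + s * s' * (F - ρ + 1 + 1) + T * ((D - 1) * ρ) ≤ T * (E * R + 2 * ρ + D) := by
  have hθ' : 0 < 1 - θ := by linarith
  have hTR : (1 - θ) * R ≤ T := by linarith
  have hT0 : 0 < T := lt_of_lt_of_le (by positivity) hTR
  refine ⟨hT0, ?_⟩
  rw [hss]
  set c := F - ρ + 2 with hcdef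
  have a1 : T * (s' * (c + d)) ≤ T * (X * R * (c + d)) :=
    mul_le_mul_of_nonneg_left (mul_le_mul_of_nonneg_right h2 (by linarith)) hT0.le
  have a2 : R ^ 2 * c ≤ T * (R * (c / (1 - θ))) := by
    have : R ^ 2 * c = ((1 - θ) * R) * (R * (c / (1 - θ))) := by field_simp
    rw [this]
    exact mul_le_mul_of_nonneg_right hTR (by positivity)
  have a3 : T * R * (X * (c + d) + c / (1 - θ) + ε) ≤ T * R * E := mul_le_mul_of_nonneg_left hmain (by positivity)
  have a4 := mul_le_mul_of_nonneg_left hε hT0.le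
  have e1 : F - ρ + 1 + d + 1 = c + d := by rw [hcdef]; ring
  have e2 : F - ρ + 1 + 1 = c := by rw [hcdef]; ring
  rw [e1, e2]
  linarith

end HW
end

section
open Polynomial
namespace HW

lemma polyineq {l ρ q d F : ℝ} (hq : 2 ≤ q) (hl : q ≤ l) (hρ : q ≤ ρ) (hd : d + q = l * ρ) (hD : 16 ≤ l * ρ)
    (hF : 2 * F = (ρ - 1) * (d - q)) (hl3 : l = 2 ∨ 3 ≤ l) :
    2 * (2 * d + F - 1) ≤ (d - 1) * (d - 2) ∧
    (q + 1) / 2 * (F - ρ + 2 + d) + 2 * (F - ρ + 2) + 1 ≤ (d - 1) * (d - 2) ∧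
    (d + q - 1) * ρ - 2 * ρ - (d + q) ≤ (d - 1) * (d - 2) := by
  rcases hl3 with rfl | hl3
  · have : q = 2 := le_antisymm hl hq
    subst this
    have h8 : 8 ≤ ρ := by linarith
    have hd' : d = 2 * ρ - 2 := by linarith
    subst hd'
    have hF' : F = (ρ - 1) * (ρ - 2) := by linarith
    subst hF'
    refine ⟨?_, ?_, ?_⟩ <;> nlinarith
  · have h4q : 4 * q ≤ d + q := by
      have : q * q ≤ l * ρ := mul_le_mul hl hρ (by linarith) (by linarith)
      by_cases h : q ≤ 4
      · linarith
      · nlinarith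
    have h12 : 12 ≤ d := by
      nlinarith
    have h3r : 3 * ρ ≤ d + q := by rw [hd]; exact mul_le_mul_of_nonneg_right hl3 (by linarith)
    have hqr : q * ρ ≤ d + q := by rw [hd]; exact mul_le_mul_of_nonneg_right hl (by linarith)
    have hdq : 3 * q ≤ d := by linarith
    refine ⟨?_, ?_, ?_⟩
    · have : (ρ - 1) * (d - q) ≤ ((d + q) / 3 - 1) * (d - q) :=
        mul_le_mul_of_nonneg_right (by linarith) (by linarith)
      nlinarith
    · have h1 : (q + 5) / 2 * (F - ρ + 2) ≤ (q + 5) / 2 * ((ρ - 1) * (d - q) / 2) :=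
        mul_le_mul_of_nonneg_left (by linarith) (by linarith)
      have h2 : (q + 5) * (ρ - 1) * (d - q) ≤ (8 / 3 * (d + q) - q - 5) * (d - q) :=
        mul_le_mul_of_nonneg_right (by linarith) (by linarith)
      nlinarith
    · have : (d + q - 3) * ρ ≤ (d + q - 3) * ((d + q) / 3) := mul_le_mul_of_nonneg_left (by linarith) (by linarith)
      nlinarith


theorem part_H4 {K : Type*} [Field K] [Fintype K] {p e q v r m κ d : ℕ} [Fact p.Prime] [CharP K p]
    (hq : q = p ^ e) (he : 1 ≤ e) (hv : 1 ≤ v) (hr : 1 ≤ r) (hcard : Fintype.card K = p ^ m)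
    {c : ℕ → K} (hc : c r = 1) (hgcd : ∀ g, (∀ i ≤ r, c i ≠ 0 → g ∣ v + i) → g = 1)
    (hd : d = q ^ (v + r) - q) (hex : ¬ (q = 2 ∧ v = 1 ∧ r = 1))
    {R E : ℝ} (hR0 : 0 ≤ R) (hR : R ^ 2 = (p : ℝ) ^ m) (hE : E < R) (hEd : E = ((d : ℝ) - 1) * (d - 2))
    (hκ : p ^ m ≤ (good q r c).card + κ) (hκρ : κ ≤ q ^ r) :
    (p : ℝ) ^ m - E * R - 2 * q ^ r - q ^ (v + r) + (q - 1) * κ + 1 ≤ ((pts q v r c).card : ℝ) := by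
  have hq2 := hq2 (p := p) hq he
  have hp1 : 1 < p := (Fact.out : p.Prime).one_lt
  obtain ⟨e1, e2, he12, he1, he2⟩ : ∃ e1 e2, e1 + e2 = m ∧ e1 ≤ e2 ∧ e2 ≤ e1 + 1 :=
    ⟨m / 2, m - m / 2, by omega, by omega, by omega⟩
  have hlq : q ≤ q ^ v := Nat.le_self_pow (by omega) q
  have hrq : q ≤ q ^ r := Nat.le_self_pow (by omega) q
  have hDd : d + q = q ^ v * q ^ r := by
    have : q ≤ q ^ (v + r) := Nat.le_self_pow (by omega) q
    rw [hd, ← pow_add]; omega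
  have hss : (p : ℝ) ^ e1 * (p : ℝ) ^ e2 = R ^ 2 := by rw [hR, ← he12, pow_add]
  have hRs : R ≤ (p : ℝ) ^ e2 := by
    apply le_of_sq_le_sq _ (by positivity)
    rw [hR, ← pow_mul]
    apply pow_le_pow_right₀ (by exact_mod_cast hp1.le); omega
  have hsp : ((p : ℝ) ^ e2) ^ 2 ≤ p * R ^ 2 := by
    rw [hR, ← pow_mul, ← pow_succ']
    apply pow_le_pow_right₀ (by exact_mod_cast hp1.le); omega
  have hsX : ∀ X : ℝ, 0 ≤ X → (p : ℝ) ≤ X ^ 2 → (p : ℝ) ^ e2 ≤ X * R := by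
    intro X hX hpX
    apply le_of_sq_le_sq _ (by positivity)
    rw [mul_pow]
    exact hsp.trans (mul_le_mul_of_nonneg_right hpX (by positivity))
  have hpq : p ≤ q := by rw [hq]; exact Nat.le_self_pow (by omega) p
  by_cases hD16 : 16 ≤ q ^ (v + r)
  · -- generic case
    have hev : Even (((q ^ r : ℕ) - 1 : ℤ) * ((q ^ (v + r) : ℕ) - 2 * q)) := by
      rcases Nat.even_or_odd q with h | h
      · apply Even.mul_left
        have : Even ((q ^ (v + r) : ℕ) : ℤ) := by
          rw [Int.even_coe_nat]; exact h.pow_of_ne_zero (by omega)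
        exact this.sub (even_two_mul _)
      · apply Even.mul_right
        have : Odd ((q ^ r : ℕ) : ℤ) := by
          rw [Int.odd_coe_nat]; exact h.pow
        exact this.sub_odd odd_one
    obtain ⟨F, hF⟩ := hev
    rw [← two_mul] at hF
    have hDr : (d : ℝ) + q = (q : ℝ) ^ v * (q : ℝ) ^ r := by exact_mod_cast hDd
    have hDr' : (q : ℝ) ^ (v + r) = d + q := by rw [hDr, pow_add]
    have hFr : 2 * (F : ℝ) = ((q : ℝ) ^ r - 1) * (d - q) := by
      have h1 : 2 * (F : ℝ) = ((q : ℝ) ^ r - 1) * ((q : ℝ) ^ (v + r) - 2 * q) := by exact_mod_cast hF.symm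
      rw [h1, hDr']; ring
    have hl3 : (q : ℝ) ^ v = 2 ∨ 3 ≤ (q : ℝ) ^ v := by
      have : q ^ v = 2 ∨ 3 ≤ q ^ v := by omega
      exact_mod_cast this
    have hq2r : (2 : ℝ) ≤ q := by exact_mod_cast hq2
    have hlqr : (q : ℝ) ≤ q ^ v := by exact_mod_cast hlq
    have hrqr : (q : ℝ) ≤ q ^ r := by exact_mod_cast hrq
    obtain ⟨i1, i2, i3⟩ := polyineq hq2r hlqr hrqr hDr
      (by rw [← pow_add]; exact_mod_cast hD16) hFr hl3
    rw [← hEd] at i1 i2 i3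
    have hd0 : (0 : ℝ) ≤ d := by positivity
    have hd3 : (3 : ℝ) ≤ d := by
      have h16 : (16 : ℝ) ≤ d + q := by rw [← hDr']; exact_mod_cast hD16
      have := mul_le_mul hlqr hrqr (by linarith) (by linarith)
      rw [← hDr] at this
      nlinarith only [h16, this, hq2r]
    have hF0 : 0 ≤ (F : ℝ) - q ^ r + 2 := by
      have h16 : (16 : ℝ) ≤ d + q := by rw [← hDr']; exact_mod_cast hD16
      have h17 := mul_le_mul hlqr hrqr (by linarith) (by linarith)
      rw [← hDr] at h17
      have : (2 : ℝ) ≤ d - q := by nlinarith only [h16, h17, hq2r]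
      nlinarith only [this, hFr, hrqr, hq2r]
    refine part_H3 (F := F) hq he hv hr hcard hc hgcd hd hF.symm he12 he1 he2 (by omega) hR0 hR hE hEd hκ hκρ ?_ ?_
    · have : 3 * (d : ℝ) + 2 * F - (q : ℝ) ^ r + 1 ≤ (p : ℝ) ^ e2 := by linarith
      exact_mod_cast this
    · intro T _ hT
      have hTr : (p : ℝ) ^ e2 - (2 * d + F - 1) ≤ (T : ℝ) := by exact_mod_cast hT
      have := arith (R := R) (s := (p : ℝ) ^ e1) (s' := (p : ℝ) ^ e2) (X := (q + 1) / 2) (θ := 1 / 2) (ε := 1)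
        (d := d) (F := F) (ρ := (q : ℝ) ^ r) (D := (q : ℝ) ^ (v + r)) (E := E) (T := T)
        (by linarith) hss hRs (hsX _ (by positivity) (by
          have h1 : (p : ℝ) ≤ q := by exact_mod_cast hpq
          nlinarith only [h1, sq_nonneg ((q : ℝ) - 1)])) hTr (by linarith) (by norm_num) hF0 hd0
        (by rw [show (1 : ℝ) - 1 / 2 = 1 / 2 by norm_num, div_div_eq_mul_div, div_one]; linarith) (by rw [hDr']; linarith)
      refine ⟨?_, this.2⟩
      have h1 : 0 < T := by exact_mod_cast this.1
      omega
  · -- small cases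
    have hqv : q < 4 := by
      by_contra h
      apply hD16
      calc 16 = 4 ^ 2 := by norm_num
        _ ≤ q ^ 2 := Nat.pow_le_pow_left (by omega) 2
        _ ≤ q ^ (v + r) := Nat.pow_le_pow_right (by omega) (by omega)
    have hvr : v + r < 4 := by
      by_contra h
      apply hD16
      calc 16 = 2 ^ 4 := by norm_num
        _ ≤ q ^ 4 := Nat.pow_le_pow_left (by omega) 4
        _ ≤ q ^ (v + r) := Nat.pow_le_pow_right (by omega) (by omega)
    have hcases : (q = 2 ∧ v = 2 ∧ r = 1) ∨ (q = 2 ∧ v = 1 ∧ r = 2) ∨ (q = 3 ∧ v = 1 ∧ r = 1) := by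
      have : q = 2 ∨ q = 3 := by omega
      rcases this with h | h
      · omega
      · have : v + r < 3 := by
          by_contra h3
          have : v + r = 3 := by omega
          rw [this, h] at hD16; norm_num at hD16
        omega
    have hpe : p = q := by
      have hpp : q.Prime := by rcases hcases with h | h | h <;> rw [h.1] <;> norm_num
      have hdv : p ∣ q := hq ▸ dvd_pow_self p (by omega)
      have := (Nat.prime_dvd_prime_iff_eq (Fact.out : p.Prime) hpp).1 hdv
      exact this
    subst hpe
    clear hq2 hp1 hlq hrq hpq hqv hD16 hvr hex
    rcases hcases with ⟨rfl, rfl, rfl⟩ | ⟨rfl, rfl, rfl⟩ | ⟨rfl, rfl, rfl⟩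
    · have hd6 : d = 6 := by rw [hd]; norm_num
      subst hd6
      have hE20 : E = 20 := by rw [hEd]; norm_num
      refine part_H3 (F := 2) hq he hv hr hcard hc hgcd hd (by norm_num) he12 he1 he2 (by norm_num) hR0 hR hE hEd hκ hκρ ?_ ?_
      · have : (20 : ℝ) < 2 ^ e2 := by push_cast at hRs; linarith
        have : 20 < 2 ^ e2 := by exact_mod_cast this
        have : ((21 : ℕ) : ℤ) ≤ (2 ^ e2 : ℕ) := by exact_mod_cast this
        push_cast at this ⊢; linarith
      · intro T _ hT
        have hTr : (2 : ℝ) ^ e2 - (2 * 6 + 2 - 1) ≤ (T : ℝ) := by exact_mod_cast hT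
        have := arith (R := R) (s := (2 : ℝ) ^ e1) (s' := (2 : ℝ) ^ e2) (X := 3 / 2) (θ := 13 / 20) (ε := 1)
          (d := 6) (F := 2) (ρ := 2) (D := 8) (E := E) (T := T)
          (by linarith) (by exact_mod_cast hss) (by exact_mod_cast hRs) (by exact_mod_cast hsX _ (by norm_num) (by norm_num)) hTr (by linarith) (by norm_num) (by norm_num) (by norm_num)
          (by rw [hE20]; norm_num) (by linarith)
        refine ⟨?_, ?_⟩
        · have h1 : 0 < T := by exact_mod_cast this.1
          omega
        · have := this.2
          norm_num at this ⊢
          linarith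
    · have hd6 : d = 6 := by rw [hd]; norm_num
      subst hd6
      have hE20 : E = 20 := by rw [hEd]; norm_num
      have hm9 : 9 ≤ m := by
        by_contra h
        have h1 : (2 : ℝ) ^ m ≤ 2 ^ 8 := pow_le_pow_right₀ (by norm_num) (by omega)
        push_cast at hR
        nlinarith
      have he25 : 5 ≤ e2 := by omega
      refine part_H3 (F := 6) hq he hv hr hcard hc hgcd hd (by norm_num) he12 he1 he2 (by norm_num) hR0 hR hE hEd hκ hκρ ?_ ?_
      · have : 2 ^ 5 ≤ 2 ^ e2 := Nat.pow_le_pow_right (by norm_num) he25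
        have : ((2 ^ 5 : ℕ) : ℤ) ≤ (2 ^ e2 : ℕ) := by exact_mod_cast this
        push_cast at this ⊢; linarith
      · intro T hTe hT
        rcases Nat.lt_or_ge m 12 with hm | hm
        · have : (e1 = 4 ∧ e2 = 5) ∨ (e1 = 5 ∧ e2 = 5) ∨ (e1 = 5 ∧ e2 = 6) := by omega
          rw [← hss] at hR
          rcases this with ⟨rfl, rfl⟩ | ⟨rfl, rfl⟩ | ⟨rfl, rfl⟩
          · norm_num at hTe hss
            subst hTe
            have : (22.6 : ℝ) ≤ R := by nlinarith
            refine ⟨by norm_num, ?_⟩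
            rw [hE20]; norm_num; linarith
          · norm_num at hTe hss
            subst hTe
            have : (31 : ℝ) ≤ R := by nlinarith
            refine ⟨by norm_num, ?_⟩
            rw [hE20]; norm_num; linarith
          · norm_num at hTe hss
            subst hTe
            have : (45 : ℝ) ≤ R := by nlinarith
            refine ⟨by norm_num, ?_⟩
            rw [hE20]; norm_num; linarith
        have hR64 : 64 ≤ R := by
          apply le_of_sq_le_sq _ hR0
          rw [hR]
          have h1 : (2 : ℝ) ^ 12 ≤ 2 ^ m := pow_le_pow_right₀ (by norm_num) (by omega)
          norm_num at h1 ⊢; exact h1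
        have hTr : (2 : ℝ) ^ e2 - (2 * 6 + 6 - 1) ≤ (T : ℝ) := by exact_mod_cast hT
        have := arith (R := R) (s := (2 : ℝ) ^ e1) (s' := (2 : ℝ) ^ e2) (X := 1.4143) (θ := 17 / 64) (ε := 12 / 64)
          (d := 6) (F := 6) (ρ := 4) (D := 8) (E := E) (T := T)
          (by linarith) (by exact_mod_cast hss) (by exact_mod_cast hRs) (by have := hsX 1.4143 (by norm_num) (by norm_num); push_cast at this; exact this) hTr (by linarith) (by norm_num) (by norm_num) (by norm_num)
          (by rw [hE20]; norm_num) (by linarith)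
        refine ⟨?_, ?_⟩
        · have h1 : 0 < T := by exact_mod_cast this.1
          omega
        · have := this.2
          norm_num at this ⊢
          linarith
    · have hd6 : d = 6 := by rw [hd]; norm_num
      subst hd6
      have hE20 : E = 20 := by rw [hEd]; norm_num
      have hm9 : 6 ≤ m := by
        by_contra h
        have h1 : (3 : ℝ) ^ m ≤ 3 ^ 5 := pow_le_pow_right₀ (by norm_num) (by omega)
        push_cast at hR
        nlinarith
      have he25 : 3 ≤ e2 := by omega
      have hR64 : 27 ≤ R := by
        apply le_of_sq_le_sq _ hR0
        rw [hR]
        have h1 : (3 : ℝ) ^ 6 ≤ 3 ^ m := pow_le_pow_right₀ (by norm_num) (by omega)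
        norm_num at h1 ⊢; exact h1
      refine part_H3 (F := 3) hq he hv hr hcard hc hgcd hd (by norm_num) he12 he1 he2 (by norm_num) hR0 hR hE hEd hκ hκρ ?_ ?_
      · have : 3 ^ 3 ≤ 3 ^ e2 := Nat.pow_le_pow_right (by norm_num) he25
        have : ((3 ^ 3 : ℕ) : ℤ) ≤ (3 ^ e2 : ℕ) := by exact_mod_cast this
        push_cast at this ⊢; linarith
      · intro T hTe hT
        have hTr : (3 : ℝ) ^ e2 - (2 * 6 + 3 - 1) ≤ (T : ℝ) := by exact_mod_cast hT
        have := arith (R := R) (s := (3 : ℝ) ^ e1) (s' := (3 : ℝ) ^ e2) (X := 7 / 4) (θ := 14 / 27) (ε := 1 / 3)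
          (d := 6) (F := 3) (ρ := 3) (D := 9) (E := E) (T := T)
          (by linarith) (by exact_mod_cast hss) (by exact_mod_cast hRs) (by have := hsX (7 / 4) (by norm_num) (by norm_num); push_cast at this; exact this) hTr (by linarith) (by norm_num) (by norm_num) (by norm_num)
          (by rw [hE20]; norm_num) (by linarith)
        refine ⟨?_, ?_⟩
        · have h1 : 0 < T := by exact_mod_cast this.1
          omega
        · have := this.2
          norm_num at this ⊢
          linarith

end HW
end

section
open Polynomial
namespace HW

lemma exists_sub {K : Type} [Field K] [Fintype K] {p e q n : ℕ} [Fact p.Prime] [CharP K p]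
    (hq : q = p ^ e) (he : 1 ≤ e) (hcard : Fintype.card K = q ^ n) :
    ∃ (L : Type) (_ : Field L) (_ : Fintype L) (_ : Algebra L K), Fintype.card L = q := by
  classical
  let _ : Algebra (ZMod p) K := ZMod.algebra K p
  have hfin : Module.finrank (ZMod p) K = e * n := by
    have := Module.natCard_eq_pow_finrank (K := ZMod p) (V := K)
    rw [Nat.card_eq_fintype_card, hcard, Nat.card_zmod, hq, ← pow_mul] at this
    exact (Nat.pow_right_injective (Fact.out : p.Prime).two_le this).symm
  have hg : Module.finrank (ZMod p) (GaloisField p e) = e := GaloisField.finrank p (by omega)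
  obtain ⟨φ⟩ := FiniteField.nonempty_algHom_of_finrank_dvd (F := ZMod p) (K := GaloisField p e) (L := K)
    (by rw [hfin, hg]; exact dvd_mul_right _ _)
  refine ⟨GaloisField p e, inferInstance, Fintype.ofFinite _, φ.toRingHom.toAlgebra, ?_⟩
  rw [Fintype.card_eq_nat_card, GaloisField.card p e (by omega), hq]

lemma count {K : Type} [Field K] [Fintype K] {p e q n : ℕ} [Fact p.Prime] [CharP K p]
    (hq : q = p ^ e) (he : 1 ≤ e) (hcard : Fintype.card K = q ^ n)
    (f : K → K) (hfa : ∀ x y, f (x + y) = f x + f y) (hfu : ∀ u x, u ^ q = u → f (u * x) = u * f x)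
    (hker : ∀ m : K, Nat.card {x : K // f x = m * x} < q ^ n)
    (N : ℕ → ℕ)
    (hN : ∀ i, N i = Nat.card {m : K // Nat.log q (Nat.card {x : K // f x = m * x}) = i})
    (S : Finset (K × K)) (hS : ∀ x ∈ S, x.1 ≠ 0 ∧ (x.2 / x.1) ^ q ≠ x.2 / x.1 ∧ f x.1 * x.2 = f x.2 * x.1) :
    (∀ m, Nat.card {x : K // f x = m * x} = q ^ Nat.log q (Nat.card {x : K // f x = m * x})) ∧
    (S.card : ℝ) ≤ ∑ i ∈ Finset.Icc 1 (n - 1), (N i : ℝ) * ((q : ℝ) ^ i - 1) * ((q : ℝ) ^ i - (q : ℝ)) := by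
  classical
  have hq2 := hq2 (p := p) hq he
  obtain ⟨L, _, _, _, hL⟩ := exists_sub hq he hcard
  have hLq : ∀ u : L, (algebraMap L K u) ^ q = algebraMap L K u := by
    intro u; rw [← map_pow, ← hL, FiniteField.pow_card]
  have hpow : ∀ m, ∃ w, Nat.card {x : K // f x = m * x} = q ^ w := by
    intro m
    let V : Submodule L K :=
      { carrier := {x | f x = m * x}
        add_mem' := by
          intro a b ha hb
          simp only [Set.mem_ofPred_eq] at *
          rw [hfa, ha, hb]; ring
        zero_mem' := by
          have := hfa 0 0
          simp only [add_zero] at this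
          simp only [Set.mem_ofPred_eq, mul_zero]
          exact (left_eq_add.1 this)
        smul_mem' := by
          intro u x hx
          simp only [Set.mem_ofPred_eq] at *
          rw [Algebra.smul_def, hfu _ _ (hLq u), hx]; ring }
    refine ⟨Module.finrank L V, ?_⟩
    have := Module.natCard_eq_pow_finrank (K := L) (V := V)
    rw [Nat.card_eq_fintype_card (α := L), hL] at this
    exact this
  have hlog : ∀ m, Nat.card {x : K // f x = m * x} = q ^ Nat.log q (Nat.card {x : K // f x = m * x}) := by
    intro m
    obtain ⟨w, hw⟩ := hpow m
    rw [hw, Nat.log_pow (by omega)]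
  refine ⟨hlog, ?_⟩
  set w : K → ℕ := fun m => Nat.log q (Nat.card {x : K // f x = m * x}) with hw
  have hwn : ∀ m, w m < n := by
    intro m
    have := hker m
    rw [hlog m] at this
    exact (Nat.pow_lt_pow_iff_right (by omega)).1 this
  have hfib : ∀ m, (S.filter (fun x => f x.1 / x.1 = m)).card ≤ (q ^ w m - 1) * (q ^ w m - q) := by
    intro m
    set Z : Finset K := Finset.univ.filter (fun x => f x = m * x) with hZ
    have hZc : Z.card = q ^ w m := by
      rw [hw]; simp only
      rw [← hlog m, Nat.card_eq_fintype_card, Fintype.card_subtype]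
    have hZ0 : (0 : K) ∈ Z := by
      have := hfa 0 0
      simp only [add_zero] at this
      rw [hZ, Finset.mem_filter]
      simp only [mul_zero]
      exact ⟨Finset.mem_univ _, left_eq_add.1 this⟩
    have hY : ∀ x ∈ Z.erase 0, (Z.filter (fun y => (y / x) ^ q ≠ y / x)).card ≤ q ^ w m - q := by
      intro x hx
      rw [Finset.mem_erase] at hx
      have h1 := Finset.card_filter_add_card_filter_not (s := Z) (fun y => (y / x) ^ q ≠ y / x)
      have h2 : q ≤ (Z.filter (fun y => ¬ (y / x) ^ q ≠ y / x)).card := by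
        have hLL : (Finset.univ.image (fun u : L => algebraMap L K u * x)).card = q := by
          rw [Finset.card_image_of_injective, Finset.card_univ, hL]
          intro u u' h
          simp only at h
          exact (algebraMap L K).injective (mul_right_cancel₀ hx.1 h)
        calc q = _ := hLL.symm
          _ ≤ _ := ?_
        · apply Finset.card_le_card
          intro y hy
          obtain ⟨u, _, rfl⟩ := Finset.mem_image.1 hy
          rw [Finset.mem_filter, hZ, Finset.mem_filter]
          have hx2 := (Finset.mem_filter.1 hx.2).2
          refine ⟨⟨Finset.mem_univ _, ?_⟩, ?_⟩
          · rw [hfu _ _ (hLq u), hx2]; ring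
          · rw [mul_div_cancel_right₀ _ hx.1, hLq]; simp
      omega
    have hsub : (S.filter (fun x => f x.1 / x.1 = m)) ⊆
        ((Z.erase 0).sigma (fun x => Z.filter (fun y => (y / x) ^ q ≠ y / x))).image (fun x => (x.1, x.2)) := by
      rintro ⟨x, y⟩ hx
      rw [Finset.mem_filter] at hx
      obtain ⟨h1, h2, h3⟩ := hS _ hx.1
      simp only at h1 h2 h3 hx
      have hfx : f x = m * x := by rw [← hx.2]; field_simp
      rw [Finset.mem_image]
      refine ⟨⟨x, y⟩, ?_, rfl⟩
      rw [Finset.mem_sigma, Finset.mem_erase, Finset.mem_filter, hZ, Finset.mem_filter, Finset.mem_filter]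
      refine ⟨⟨h1, Finset.mem_univ _, hfx⟩, ⟨Finset.mem_univ _, ?_⟩, h2⟩
      simp only
      rw [hfx] at h3
      apply mul_right_cancel₀ h1
      rw [← h3]; ring
    refine (Finset.card_le_card hsub).trans (Finset.card_image_le.trans ?_)
    rw [Finset.card_sigma]
    refine (Finset.sum_le_card_nsmul _ _ _ hY).trans ?_
    rw [Finset.card_erase_of_mem hZ0, hZc, smul_eq_mul]
  have hG : ∀ i : ℕ, (((q ^ i - 1) * (q ^ i - q) : ℕ) : ℝ) = ((q : ℝ) ^ i - 1) * ((q : ℝ) ^ i - (q : ℝ)) := by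
    intro i
    rcases i with _ | i
    · simp
    have h1 : 1 ≤ q ^ (i + 1) := Nat.one_le_pow _ _ (by omega)
    have h2 : q ≤ q ^ (i + 1) := Nat.le_self_pow (by omega) q
    push_cast [h1, h2]; ring
  have hcardS : (S.card : ℝ) ≤ ∑ m : K, ((q : ℝ) ^ w m - 1) * ((q : ℝ) ^ w m - (q : ℝ)) := by
    rw [Finset.card_eq_sum_card_fiberwise (f := fun x => f x.1 / x.1) (t := Finset.univ) (by intro x _; simp)]
    push_cast
    apply Finset.sum_le_sum
    intro m _
    rw [← hG]
    exact_mod_cast hfib m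
  refine hcardS.trans ?_
  rw [← Finset.sum_fiberwise_of_maps_to (g := w) (t := Finset.range n) (fun m _ => Finset.mem_range.2 (hwn m))]
  have hterm : ∀ i, ∑ m ∈ Finset.univ.filter (fun m => w m = i), ((q : ℝ) ^ w m - 1) * ((q : ℝ) ^ w m - (q : ℝ)) =
      (N i : ℝ) * ((q : ℝ) ^ i - 1) * ((q : ℝ) ^ i - (q : ℝ)) := by
    intro i
    rw [Finset.sum_congr rfl (g := fun _ => ((q : ℝ) ^ i - 1) * ((q : ℝ) ^ i - (q : ℝ)))]
    · rw [Finset.sum_const, nsmul_eq_mul, hN, Nat.card_eq_fintype_card, Fintype.card_subtype, mul_assoc]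
    · intro m hm
      rw [(Finset.mem_filter.1 hm).2]
  rw [Finset.sum_congr rfl (fun i _ => hterm i)]
  have hn : 0 < n := lt_of_le_of_lt (Nat.zero_le _) (hwn 0)
  apply le_of_eq
  symm
  apply Finset.sum_subset
  · intro i hi
    rw [Finset.mem_Icc] at hi
    rw [Finset.mem_range]; omega
  · intro i hi hi'
    rw [Finset.mem_range] at hi
    rw [Finset.mem_Icc] at hi'
    have : i = 0 := by omega
    rw [this]; simp

end HW
end

section
open Polynomial
namespace HW

lemma pow_sum_frob {K : Type} [Field K] {p : ℕ} [Fact p.Prime] [CharP K p] (a : ℕ) {ι : Type} (s : Finset ι) (g : ι → K) :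
    (∑ i ∈ s, g i) ^ p ^ a = ∑ i ∈ s, g i ^ p ^ a := sum_pow_char_pow _ _ _ _

lemma inj_frob {K : Type} [Field K] {p : ℕ} [Fact p.Prime] [CharP K p] (a : ℕ) {x y : K} (h : x ^ p ^ a = y ^ p ^ a) : x = y := by
  have : (x - y) ^ p ^ a = 0 := by rw [sub_pow_char_pow, h, sub_self]
  exact sub_eq_zero.1 (pow_eq_zero_iff (by have := (Fact.out : p.Prime).pos; positivity) |>.1 this)

lemma surj_frob {K : Type} [Field K] [Fintype K] {p : ℕ} [Fact p.Prime] [CharP K p] (a : ℕ) (x : K) : ∃ y, y ^ p ^ a = x := by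
  have h : Function.Injective (fun y : K => y ^ p ^ a) := fun x y h => inj_frob a h
  exact Finite.surjective_of_injective h x

lemma link {K : Type} [Field K] [Fintype K] {p e q q0 v r : ℕ} [Fact p.Prime] [CharP K p]
    (hq : q = p ^ e) (he : 1 ≤ e) (hr : 1 ≤ r) (c : ℕ → K) (hc : c r = 1) (f : K → K)
    (hq0 : ∀ u : K, u ^ q0 = u → u ^ q = u)
    (hf : ∀ x, f x = ∑ i ∈ Finset.range (r + 1), c i ^ q ^ v * x ^ q ^ (v + i)) :
    (∃ S : Finset (K × K), S.card = (pts q v r c).card ∧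
      ∀ x ∈ S, x.1 ≠ 0 ∧ (x.2 / x.1) ^ q0 ≠ x.2 / x.1 ∧ f x.1 * x.2 = f x.2 * x.1) ∧
    Fintype.card K ≤ (good q r c).card + Nat.card {x : K // f x = 0} ∧
    Nat.card {x : K // f x = 0} ≤ q ^ r := by
  classical
  have hq2 := hq2 (p := p) hq he
  have hl : q ^ v = p ^ (e * v) := by rw [hq, pow_mul]
  have hle : ∀ i ∈ Finset.range (r + 1), q ^ i ≤ q ^ r := fun i hi =>
    Nat.pow_le_pow_right (by omega) (by have := Finset.mem_range.1 hi; omega)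
  have hinv : ∀ (z : K) (g : ℕ → K), z ≠ 0 → ∑ i ∈ Finset.range (r + 1), c i * z⁻¹ ^ q ^ i * g i =
      z⁻¹ ^ q ^ r * ∑ i ∈ Finset.range (r + 1), c i * z ^ (q ^ r - q ^ i) * g i := by
    intro z g hz
    rw [Finset.mul_sum]
    apply Finset.sum_congr rfl
    intro i hi
    have : z⁻¹ ^ q ^ r * z ^ (q ^ r - q ^ i) = z⁻¹ ^ q ^ i := by
      obtain ⟨b, hb⟩ := Nat.exists_eq_add_of_le (hle i hi)
      rw [hb, Nat.add_sub_cancel_left, pow_add, mul_assoc, ← mul_pow, inv_mul_cancel₀ hz, one_pow, mul_one]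
    rw [← this]; ring
  have hf2 : ∀ x, f x = (∑ i ∈ Finset.range (r + 1), c i * x ^ q ^ i) ^ q ^ v := by
    intro x
    rw [hf, hl, pow_sum_frob, ← hl]
    apply Finset.sum_congr rfl
    intro i _
    rw [mul_pow, ← pow_mul, pow_add, mul_comm (q ^ v)]
  have hf0 : ∀ x, f x = 0 ↔ ∑ i ∈ Finset.range (r + 1), c i * x ^ q ^ i = 0 := by
    intro x
    rw [hf2, pow_eq_zero_iff (by positivity)]
  have hcardZ : Nat.card {x : K // f x = 0} = (Finset.univ.filter (fun x => f x = 0)).card := by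
    rw [Nat.card_eq_fintype_card, Fintype.card_subtype]
  refine ⟨⟨(pts q v r c).image (fun x => (x.1⁻¹, x.2 ^ q ^ v * x.1⁻¹)), ?_, ?_⟩, ?_, ?_⟩
  · apply Finset.card_image_of_injOn
    rintro ⟨z, t⟩ hz ⟨z', t'⟩ hz' h
    simp only [Prod.mk.injEq] at h
    obtain ⟨h1, h2⟩ := h
    have hzz : z = z' := inv_injective h1
    subst hzz
    rw [Finset.mem_coe, pts, Finset.mem_filter] at hz
    have h3 := mul_right_cancel₀ (inv_ne_zero hz.2.1.1) h2
    rw [hl] at h3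
    rw [inj_frob _ h3]
  · intro x hx
    obtain ⟨⟨z, t⟩, hz, rfl⟩ := Finset.mem_image.1 hx
    rw [pts, Finset.mem_filter] at hz
    obtain ⟨_, ⟨hz0, _⟩, ht, hsum⟩ := hz
    simp only at hz0 ht hsum ⊢
    refine ⟨inv_ne_zero hz0, ?_, ?_⟩
    · rw [mul_div_cancel_right₀ _ (inv_ne_zero hz0)]
      intro h
      have h2 := hq0 _ h
      apply ht
      rw [← pow_mul, mul_comm, pow_mul, hl] at h2
      exact inj_frob _ h2
    · have h1 : ∑ i ∈ Finset.range (r + 1), c i * z⁻¹ ^ q ^ i * (t ^ q ^ (v + i) - t) = 0 := by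
        rw [hinv z _ hz0, hsum, mul_zero]
      have h2 : ∑ i ∈ Finset.range (r + 1), c i ^ q ^ v * z⁻¹ ^ q ^ (v + i) * ((t ^ q ^ v) ^ q ^ (v + i) - t ^ q ^ v) = 0 := by
        have h3 : (∑ i ∈ Finset.range (r + 1), c i * z⁻¹ ^ q ^ i * (t ^ q ^ (v + i) - t)) ^ q ^ v = 0 := by
          rw [h1, zero_pow (by positivity)]
        rw [hl, pow_sum_frob, ← hl] at h3
        rw [← h3]
        apply Finset.sum_congr rfl
        intro i _
        rw [mul_pow, mul_pow, ← pow_mul, ← pow_mul, ← pow_add, hl, sub_pow_char_pow, ← hl, ← pow_mul, ← pow_add, ← pow_add,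
          add_comm i v, add_comm (v + i) v]
      have h4 : f (t ^ q ^ v * z⁻¹) - t ^ q ^ v * f z⁻¹ = 0 := by
        rw [← h2, hf, hf, Finset.mul_sum, ← Finset.sum_sub_distrib]
        apply Finset.sum_congr rfl
        intro i _
        rw [mul_pow]; ring
      rw [sub_eq_zero.1 h4]; ring
  · rw [hcardZ, ← Finset.card_univ, ← Finset.card_filter_add_card_filter_not (s := Finset.univ)
      (fun x => x ∈ good q r c)]
    apply Nat.add_le_add
    · apply Finset.card_le_card
      intro x hx
      exact (Finset.mem_filter.1 hx).2
    · rw [← Finset.card_image_of_injective _ (inv_injective (G := K))]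
      apply Finset.card_le_card
      intro y hy
      obtain ⟨x, hx, rfl⟩ := Finset.mem_image.1 hy
      have hx := (Finset.mem_filter.1 hx).2
      rw [Finset.mem_filter]
      refine ⟨Finset.mem_univ _, ?_⟩
      rw [hf0]
      by_cases hx0 : x = 0
      · subst hx0
        apply Finset.sum_eq_zero
        intro i _
        rw [inv_zero, zero_pow (by positivity), mul_zero]
      · have h1 : ∑ i ∈ Finset.range (r + 1), c i * x ^ (q ^ r - q ^ i) = 0 := by
          by_contra h
          apply hx
          rw [good, Finset.mem_filter]
          exact ⟨Finset.mem_univ _, hx0, h⟩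
        have := hinv x (fun _ => 1) hx0
        simp only [mul_one] at this
        rw [this, h1, mul_zero]
  · rw [hcardZ]
    set P : K[X] := ∑ i ∈ Finset.range (r + 1), C (c i) * X ^ q ^ i with hP
    have hcoef : P.coeff (q ^ r) = 1 := by
      rw [hP, finset_sum_coeff, Finset.sum_eq_single r]
      · simp [hc]
      · intro i _ hi
        rw [coeff_C_mul_X_pow, if_neg]
        intro h
        exact hi ((Nat.pow_right_injective hq2 h).symm)
      · simp
    have hP0 : P ≠ 0 := by
      intro h; rw [h] at hcoef; simp at hcoef
    have hdeg : P.natDegree ≤ q ^ r := by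
      apply natDegree_sum_le_of_forall_le
      intro i hi
      exact (natDegree_C_mul_X_pow_le _ _).trans (hle i hi)
    refine le_trans ?_ ((card_roots' P).trans hdeg)
    refine le_trans (Finset.card_le_card ?_) (Multiset.toFinset_card_le P.roots)
    intro x hx
    have := (hf0 x).1 (Finset.mem_filter.1 hx).2
    rw [Multiset.mem_toFinset, mem_roots hP0, IsRoot.def, hP, eval_finset_sum]
    simpa using this

end HW
end

section
open Polynomial
namespace HW

lemma excep {K : Type} [Field K] [Fintype K] [CharP K 2] (b : K) (hb : b ≠ 0) (f : K → K)
    (hf : ∀ x, f x = b * x ^ 2 + x ^ 4) :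
    ∃ S : Finset (K × K), Fintype.card K ≤ S.card + 4 ∧
      ∀ x ∈ S, x.1 ≠ 0 ∧ (x.2 / x.1) ^ 2 ≠ x.2 / x.1 ∧ f x.1 * x.2 = f x.2 * x.1 := by
  classical
  haveI : Fact (Nat.Prime 2) := ⟨Nat.prime_two⟩
  have h2 : (2 : K) = 0 := by exact_mod_cast CharP.cast_eq_zero K 2
  set U : Finset K := Finset.univ.filter (fun u => (u ^ 2 - u) * (u ^ 2 + u + 1) ≠ 0) with hU
  have hs : ∀ u : K, ∃ x : K, x ^ 2 = b / (u ^ 2 + u + 1) := by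
    intro u
    have := surj_frob (p := 2) 1 (b / (u ^ 2 + u + 1))
    simpa using this
  choose g hg using hs
  have hg0 : ∀ u ∈ U, g u ≠ 0 ∧ u ^ 2 - u ≠ 0 ∧ u ^ 2 + u + 1 ≠ 0 := by
    intro u hu
    have h := (Finset.mem_filter.1 hu).2
    have h1 := left_ne_zero_of_mul h
    have h3 := right_ne_zero_of_mul h
    refine ⟨?_, h1, h3⟩
    intro h0
    have := hg u
    rw [h0] at this
    exact div_ne_zero hb h3 (by rw [← this]; ring)
  refine ⟨U.image (fun u => (g u, u * g u)), ?_, ?_⟩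
  · rw [Finset.card_image_of_injOn]
    · rw [← Finset.card_univ, ← Finset.card_filter_add_card_filter_not (s := Finset.univ)
        (fun u : K => (u ^ 2 - u) * (u ^ 2 + u + 1) ≠ 0)]
      apply Nat.add_le_add_left
      set P : K[X] := X ^ 4 - X with hP
      have hdeg : P.natDegree = 4 := by rw [hP]; compute_degree!
      have hP0 : P ≠ 0 := by intro h; rw [h] at hdeg; simp at hdeg
      calc _ ≤ P.roots.toFinset.card := ?_
        _ ≤ P.roots.card := Multiset.toFinset_card_le _
        _ ≤ P.natDegree := card_roots' P
        _ = 4 := hdeg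
      apply Finset.card_le_card
      intro u hu
      have h := (Finset.mem_filter.1 hu).2
      rw [not_not] at h
      rw [Multiset.mem_toFinset, mem_roots hP0, IsRoot.def, hP]
      simp only [eval_sub, eval_pow, eval_X]
      rw [← h]; ring
    · intro u hu u' hu' h
      simp only [Prod.mk.injEq] at h
      have h1 := (hg0 u hu).1
      rw [← h.1] at h
      exact mul_right_cancel₀ h1 h.2
  · intro x hx
    obtain ⟨u, hu, rfl⟩ := Finset.mem_image.1 hx
    obtain ⟨h0, h1, h3⟩ := hg0 u hu
    simp only
    refine ⟨h0, ?_, ?_⟩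
    · rw [mul_div_cancel_right₀ _ h0]; exact fun h => h1 (sub_eq_zero.2 h)
    · have h4 : g u ^ 2 * (u ^ 2 + u + 1) = b := by rw [hg, div_mul_cancel₀ _ h3]
      rw [hf, hf, ← h4]
      linear_combination (g u ^ 5) * (u - u ^ 4) * h2

theorem main_thm (p e q n k : ℕ) (hp : p.Prime) (he : 1 ≤ e) (hq : q = p ^ e)
    (hk1 : 1 ≤ k) (hkn : k < n)
    (K : Type) [Field K] [Fintype K] (hcard : Fintype.card K = q ^ n)
    (a : ℕ → K) (hmonic : a k = 1) (ha0 : a 0 = 0)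
    (hnotmono : ∃ j, j < k ∧ a j ≠ 0)
    (f : K → K) (hf : f = fun x => ∑ j ∈ Finset.range (k + 1), a j * x ^ q ^ j)
    (v : ℕ) (hv : a v ≠ 0) (hvmin : ∀ j, j < v → a j = 0)
    (h : ℕ) (hh : h = Nat.log q (Nat.card {x : K // f x = 0}))
    (N : ℕ → ℕ)
    (hN : ∀ i, N i = Nat.card {m : K // Nat.log q (Nat.card {x : K // f x = m * x}) = i}) :
    (∑ i ∈ Finset.Icc 1 (n - 1), (N i : ℝ) * ((q : ℝ) ^ i - 1) * ((q : ℝ) ^ i - (q : ℝ)))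
      ≥ (q : ℝ) ^ n
        - ((q : ℝ) ^ k - (q : ℝ) - 1) * ((q : ℝ) ^ k - (q : ℝ) - 2) * Real.sqrt ((q : ℝ) ^ n)
        - 2 * (q : ℝ) ^ (k - v) - (q : ℝ) ^ k + (q : ℝ) ^ (h + 1) - (q : ℝ) ^ h + 1 := by
  classical
  haveI : Fact p.Prime := ⟨hp⟩
  have hcardp : Fintype.card K = p ^ (e * n) := by rw [hcard, hq, pow_mul]
  haveI : CharP K p := charP_of_card_eq_prime_pow hcardp
  have hq2 : 2 ≤ q := HW.hq2 (p := p) hq he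
  have hv1 : 1 ≤ v := by
    rcases Nat.eq_zero_or_pos v with h0 | h0
    · rw [h0] at hv; exact absurd ha0 hv
    · exact h0
  have hvk : v < k := by
    obtain ⟨j, hj, haj⟩ := hnotmono
    by_contra hcon
    exact haj (hvmin j (by omega))
  -- linearity
  have hfx : ∀ x, f x = ∑ j ∈ Finset.range (k + 1), a j * x ^ q ^ j := fun x => by rw [hf]
  have hqj : ∀ j, q ^ j = p ^ (e * j) := fun j => by rw [hq, pow_mul]
  have hfa : ∀ x y, f (x + y) = f x + f y := by
    intro x y
    rw [hfx, hfx, hfx, ← Finset.sum_add_distrib]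
    apply Finset.sum_congr rfl
    intro j _
    rw [hqj, add_pow_char_pow]; ring
  have huj : ∀ u : K, u ^ q = u → ∀ j, u ^ q ^ j = u := by
    intro u hu j
    induction j with
    | zero => simp
    | succ j ih => rw [pow_succ, pow_mul, ih, hu]
  have hfu : ∀ u x, u ^ q = u → f (u * x) = u * f x := by
    intro u x hu
    rw [hfx, hfx, Finset.mul_sum]
    apply Finset.sum_congr rfl
    intro j _
    rw [mul_pow, huj u hu]; ring
  have hker : ∀ m : K, Nat.card {x : K // f x = m * x} < q ^ n := by
    intro m
    refine lt_of_le_of_lt ?_ (Nat.pow_lt_pow_right (by omega) hkn)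
    rw [Nat.card_eq_fintype_card, Fintype.card_subtype]
    set P : K[X] := (∑ j ∈ Finset.range (k + 1), C (a j) * X ^ q ^ j) - C m * X with hP
    have hcoef : P.coeff (q ^ k) = 1 := by
      rw [hP, coeff_sub, finsetSum_coeff, Finset.sum_eq_single k]
      · rw [coeff_C_mul_X_pow, if_pos rfl, coeff_C_mul_X, if_neg, hmonic, sub_zero]
        have : 1 < q ^ k := Nat.one_lt_pow (by omega) (by omega)
        omega
      · intro i _ hi
        rw [coeff_C_mul_X_pow, if_neg]
        intro h
        exact hi ((Nat.pow_right_injective hq2 h).symm)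
      · simp
    have hP0 : P ≠ 0 := by
      intro h; rw [h] at hcoef; simp at hcoef
    have hdeg : P.natDegree ≤ q ^ k := by
      refine (natDegree_sub_le _ _).trans (max_le ?_ ?_)
      · apply natDegree_sum_le_of_forall_le
        intro i hi
        exact (natDegree_C_mul_X_pow_le _ _).trans
          (Nat.pow_le_pow_right (by omega) (by have := Finset.mem_range.1 hi; omega))
      · exact (natDegree_C_mul_le _ _).trans (natDegree_X_le.trans (Nat.one_le_pow _ _ (by omega)))
    refine le_trans ?_ ((card_roots' P).trans hdeg)
    refine le_trans (Finset.card_le_card ?_) (Multiset.toFinset_card_le P.roots)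
    intro x hx
    have := (Finset.mem_filter.1 hx).2
    rw [hfx] at this
    rw [Multiset.mem_toFinset, mem_roots hP0, IsRoot.def, hP, eval_sub, eval_finsetSum]
    simp [this]
  have hcount := fun S hS => count hq he hcard f hfa hfu hker N hN S hS
  have hκh : Nat.card {x : K // f x = 0} = q ^ h := by
    have := (hcount ∅ (by simp)).1 0
    simp only [zero_mul] at this
    rw [this, hh]
  -- gcd reduction
  set T : Finset ℕ := (Finset.range (k + 1)).filter (fun j => a j ≠ 0) with hT
  set δ := T.gcd id with hδ
  have hδdvd : ∀ j, j ≤ k → a j ≠ 0 → δ ∣ j := by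
    intro j hj haj
    exact Finset.gcd_dvd (f := id) (by rw [hT, Finset.mem_filter, Finset.mem_range]; exact ⟨by omega, haj⟩)
  obtain ⟨v1, hv1'⟩ := hδdvd v hvk.le hv
  obtain ⟨k1, hk1'⟩ := hδdvd k le_rfl (by rw [hmonic]; exact one_ne_zero)
  have hδ1 : 1 ≤ δ := by
    rcases Nat.eq_zero_or_pos δ with h0 | h0
    · rw [h0] at hv1'; omega
    · exact h0
  have hv1k1 : v1 < k1 := by
    have : δ * v1 < δ * k1 := by rw [← hv1', ← hk1']; exact hvk
    exact lt_of_mul_lt_mul_left this (Nat.zero_le _)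
  have hv11 : 1 ≤ v1 := by
    rcases Nat.eq_zero_or_pos v1 with h0 | h0
    · rw [h0] at hv1'; omega
    · exact h0
  obtain ⟨r, hr⟩ : ∃ r, k1 = v1 + r := ⟨k1 - v1, by omega⟩
  have hr1 : 1 ≤ r := by omega
  set q1 := q ^ δ with hq1
  have hq1p : q1 = p ^ (e * δ) := by rw [hq1, hq, pow_mul]
  have hqv : ∀ i, q1 ^ i = q ^ (δ * i) := fun i => by rw [hq1, pow_mul]
  have hch : ∀ i, ∃ c : K, c ^ q1 ^ v1 = a (δ * (v1 + i)) := by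
    intro i
    obtain ⟨y, hy⟩ := surj_frob (p := p) (e * δ * v1) (a (δ * (v1 + i)))
    exact ⟨y, by rw [hq1p, ← pow_mul]; exact hy⟩
  choose c hc using hch
  have hcr : c r = 1 := by
    have h1 := hc r
    rw [← hr, ← hk1', hmonic, hq1p, ← pow_mul] at h1
    apply inj_frob (p := p) (e * δ * v1)
    rw [h1, one_pow]
  have hc0 : ∀ i, a (δ * (v1 + i)) ≠ 0 → c i ≠ 0 := by
    intro i hi hci
    apply hi
    rw [← hc, hci, zero_pow]
    have : 1 ≤ q1 ^ v1 := Nat.one_le_pow _ _ (by rw [hq1]; positivity)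
    omega
  have hgcd : ∀ g, (∀ i ≤ r, c i ≠ 0 → g ∣ v1 + i) → g = 1 := by
    intro g hg
    have h1 : δ * g ∣ δ := by
      conv_rhs => rw [hδ]
      apply Finset.dvd_gcd
      intro j hj
      rw [hT, Finset.mem_filter, Finset.mem_range] at hj
      obtain ⟨j1, hj1⟩ := hδdvd j (by omega) hj.2
      have hvj : v ≤ j := by
        by_contra hcon
        exact hj.2 (hvmin j (by omega))
      have h2 : v1 ≤ j1 := by
        have : δ * v1 ≤ δ * j1 := by rw [← hv1', ← hj1]; exact hvj
        exact le_of_mul_le_mul_left this hδ1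
      have h3 : j1 ≤ k1 := by
        have : δ * j1 ≤ δ * k1 := by rw [← hk1', ← hj1]; omega
        exact le_of_mul_le_mul_left this hδ1
      obtain ⟨i, rfl⟩ := Nat.exists_eq_add_of_le h2
      simp only [id]
      rw [hj1]
      apply Nat.mul_dvd_mul_left
      exact hg i (by omega) (hc0 i (by rw [← hj1]; exact hj.2))
    have h2 : δ * g ∣ δ * 1 := by rw [mul_one]; exact h1
    exact Nat.dvd_one.1 (Nat.dvd_of_mul_dvd_mul_left hδ1 h2)
  have hf1 : ∀ x, f x = ∑ i ∈ Finset.range (r + 1), c i ^ q1 ^ v1 * x ^ q1 ^ (v1 + i) := by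
    intro x
    have h1 : ∑ i ∈ Finset.range (r + 1), c i ^ q1 ^ v1 * x ^ q1 ^ (v1 + i) =
        ∑ j ∈ (Finset.range (r + 1)).image (fun i => δ * (v1 + i)), a j * x ^ q ^ j := by
      rw [Finset.sum_image]
      · apply Finset.sum_congr rfl
        intro i _
        rw [hc, hqv]
      · intro i _ i' _ hii
        have := Nat.eq_of_mul_eq_mul_left hδ1 hii
        omega
    rw [hfx, h1]
    symm
    apply Finset.sum_subset
    · intro j hj
      obtain ⟨i, hi, rfl⟩ := Finset.mem_image.1 hj
      rw [Finset.mem_range] at *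
      have : δ * (v1 + i) ≤ δ * k1 := Nat.mul_le_mul_left _ (by omega)
      omega
    · intro j hj hj'
      have : a j = 0 := by
        by_contra haj
        apply hj'
        rw [Finset.mem_range] at hj
        obtain ⟨j1, hj1⟩ := hδdvd j (by omega) haj
        have hvj : v ≤ j := by
          by_contra hcon
          exact haj (hvmin j (by omega))
        have h2 : v1 ≤ j1 := by
          have : δ * v1 ≤ δ * j1 := by rw [← hv1', ← hj1]; exact hvj
          exact le_of_mul_le_mul_left this hδ1
        have h3 : j1 ≤ k1 := by
          have : δ * j1 ≤ δ * k1 := by rw [← hk1', ← hj1]; omega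
          exact le_of_mul_le_mul_left this hδ1
        obtain ⟨i, rfl⟩ := Nat.exists_eq_add_of_le h2
        rw [Finset.mem_image]
        exact ⟨i, Finset.mem_range.2 (by omega), hj1.symm⟩
      rw [this, zero_mul]
  obtain ⟨⟨S, hScard, hS⟩, hgood, hκρ⟩ := link (q0 := q) hq1p (Nat.mul_pos (by omega) (by omega)) hr1 c hcr f
    (fun u hu => huj u hu δ) hf1
  rw [hκh] at hgood hκρ
  have hqr : q1 ^ r = q ^ (k - v) := by
    rw [hqv]; congr 1
    rw [hk1', hv1', hr, Nat.mul_add]; omega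
  have hqk : q1 ^ (v1 + r) = q ^ k := by rw [hqv, ← hr, ← hk1']
  -- real inequalities
  set R := Real.sqrt ((q : ℝ) ^ n) with hRdef
  have hR0 : 0 ≤ R := Real.sqrt_nonneg _
  have hR2 : R ^ 2 = (q : ℝ) ^ n := Real.sq_sqrt (by positivity)
  have hκr : (q : ℝ) ^ h ≤ (q : ℝ) ^ (k - v) := by rw [hqr] at hκρ; exact_mod_cast hκρ
  have hq2r : (2 : ℝ) ≤ q := by exact_mod_cast hq2
  have hDr : (q : ℝ) * (q : ℝ) ^ (k - v) ≤ (q : ℝ) ^ k := by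
    rw [← pow_succ']; exact pow_le_pow_right₀ (by linarith) (by omega)
  have hρ1 : (1 : ℝ) ≤ (q : ℝ) ^ (k - v) := one_le_pow₀ (by linarith)
  have hκ1 : (1 : ℝ) ≤ (q : ℝ) ^ h := one_le_pow₀ (by linarith)
  have hqκ : ((q : ℝ) - 1) * q ^ h ≤ (q - 1) * q ^ (k - v) := mul_le_mul_of_nonneg_left hκr (by linarith)
  rw [ge_iff_le, pow_succ']
  set E := ((q : ℝ) ^ k - (q : ℝ) - 1) * ((q : ℝ) ^ k - (q : ℝ) - 2) with hEdef
  by_cases hER : R ≤ E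
  · -- trivial case
    have h1 : 0 ≤ ∑ i ∈ Finset.Icc 1 (n - 1), (N i : ℝ) * ((q : ℝ) ^ i - 1) * ((q : ℝ) ^ i - (q : ℝ)) := by
      apply Finset.sum_nonneg
      intro i hi
      rw [Finset.mem_Icc] at hi
      have h2 : (1 : ℝ) ≤ (q : ℝ) ^ i := one_le_pow₀ (by linarith)
      have h3 : (q : ℝ) ≤ (q : ℝ) ^ i := le_self_pow₀ (by linarith) (by omega)
      exact mul_nonneg (mul_nonneg (by positivity) (by linarith)) (by linarith)
    have h4 : R * R ≤ E * R := mul_le_mul_of_nonneg_right hER hR0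
    rw [← hR2]
    linarith
  rw [not_le] at hER
  by_cases hex : q1 = 2 ∧ v1 = 1 ∧ r = 1
  · -- exceptional case
    obtain ⟨e1, e2, e3⟩ := hex
    have hqq : q ≤ q1 := Nat.le_self_pow (by omega) q
    have hq22 : q = 2 := by omega
    have hδ11 : δ = 1 := by
      rw [hq1, hq22] at e1
      exact Nat.pow_right_injective (le_refl 2) (by simpa using e1)
    have hv11' : v = 1 := by rw [hv1', hδ11, e2]
    have hk2 : k = 2 := by rw [hk1', hδ11, hr, e2, e3]
    have hp2 : p = 2 := by
      have h1 : p ∣ 2 := by rw [← hq22, hq]; exact dvd_pow_self p (by omega)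
      exact (Nat.prime_dvd_prime_iff_eq hp Nat.prime_two).1 h1
    clear_value R E
    subst hp2 hq22 hv11' hk2
    obtain ⟨S', hS'1, hS'2⟩ := excep (a 1) hv f (by
      intro x
      rw [hfx]
      simp [Finset.sum_range_succ, ha0, hmonic])
    have h1 := (hcount S' hS'2).2
    have h2 : (2 : ℝ) ^ n ≤ S'.card + 4 := by rw [hcard] at hS'1; exact_mod_cast hS'1
    have hE0 : E = 0 := by rw [hEdef]; norm_num
    rw [hE0]
    push_cast at *
    norm_num at hκr ⊢
    linarith
  have hq1r : (q : ℝ) ≤ (q1 : ℝ) := by exact_mod_cast (Nat.le_self_pow (by omega) q : q ≤ q ^ δ)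
  have hq1q1 : (q1 : ℝ) * q1 ≤ (q : ℝ) ^ k := by
    have : q1 ^ 2 ≤ q1 ^ (v1 + r) := Nat.pow_le_pow_right (by rw [hq1]; positivity) (by omega)
    rw [hqk, pow_two] at this
    exact_mod_cast this
  have hq1D : q1 ≤ q1 ^ (v1 + r) := Nat.le_self_pow (by omega) q1
  have hdr : ((q1 ^ (v1 + r) - q1 : ℕ) : ℝ) = (q : ℝ) ^ k - q1 := by
    rw [Nat.cast_sub hq1D, hqk]; push_cast; ring
  have hd2 : (2 : ℝ) ≤ (q : ℝ) ^ k - q1 := by nlinarith only [hq1q1, hq1r, hq2r]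
  set E1 := ((q : ℝ) ^ k - q1 - 1) * ((q : ℝ) ^ k - q1 - 2) with hE1
  have hE1E : E1 ≤ E := by
    rw [hE1, hEdef]
    exact mul_le_mul (by linarith) (by linarith) (by linarith) (by linarith)
  have hpm : (p : ℝ) ^ (e * n) = (q : ℝ) ^ n := by rw [hq]; push_cast; rw [pow_mul]
  have hfin := part_H4 (κ := q ^ h) (R := R) (E := E1) hq1p (Nat.mul_pos (by omega) (by omega)) hv11 hr1 hcardp hcr hgcd rfl hex hR0
    (by rw [hR2, hpm]) (by linarith) (by rw [hdr]) (by rw [← hcardp]; exact hgood) hκρ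
  rw [← hScard] at hfin
  have hlast := (hcount S hS).2
  have hqr' : (q1 : ℝ) ^ r = (q : ℝ) ^ (k - v) := by exact_mod_cast hqr
  have hqk' : (q1 : ℝ) ^ (v1 + r) = (q : ℝ) ^ k := by exact_mod_cast hqk
  rw [hpm, hqr', hqk'] at hfin
  have h5 : E1 * R ≤ E * R := mul_le_mul_of_nonneg_right hE1E hR0
  have h6 : ((q : ℝ) - 1) * q ^ h ≤ (q1 - 1) * q ^ h := mul_le_mul_of_nonneg_right (by linarith) (by positivity)
  push_cast at hfin
  linarith

end HW
end

/-- Hasse–Weil type lower bound on the weight distribution of a monic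
non-monomial `q`-polynomial of index `t = 0` (Theorem `Th:Curve`, case `t = 0`).
Here `K = F_{q^n}`, the weight of `m ∈ K` is `dim_{F_q} ker (f - m·x)`, encoded as
`Nat.log q` of the cardinality of the kernel (the kernel is an `F_q`-subspace, so its
cardinality is `q^dim`). -/
theorem stmt_0 (p e q n k : ℕ) (hp : p.Prime) (he : 1 ≤ e) (hq : q = p ^ e)
    (hk1 : 1 ≤ k) (hkn : k < n)
    (K : Type) [Field K] [Fintype K] (hcard : Fintype.card K = q ^ n)
    (a : ℕ → K) (hmonic : a k = 1) (ha0 : a 0 = 0)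
    (hnotmono : ∃ j, j < k ∧ a j ≠ 0)
    (f : K → K) (hf : f = fun x => ∑ j ∈ Finset.range (k + 1), a j * x ^ q ^ j)
    (v : ℕ) (hv : a v ≠ 0) (hvmin : ∀ j, j < v → a j = 0)
    (h : ℕ) (hh : h = Nat.log q (Nat.card {x : K // f x = 0}))
    (N : ℕ → ℕ)
    (hN : ∀ i, N i = Nat.card {m : K // Nat.log q (Nat.card {x : K // f x = m * x}) = i}) :
    (∑ i ∈ Finset.Icc 1 (n - 1), (N i : ℝ) * ((q : ℝ) ^ i - 1) * ((q : ℝ) ^ i - (q : ℝ)))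
      ≥ (q : ℝ) ^ n
        - ((q : ℝ) ^ k - (q : ℝ) - 1) * ((q : ℝ) ^ k - (q : ℝ) - 2) * Real.sqrt ((q : ℝ) ^ n)
        - 2 * (q : ℝ) ^ (k - v) - (q : ℝ) ^ k + (q : ℝ) ^ (h + 1) - (q : ℝ) ^ h + 1 := by
  exact HW.main_thm p e q n k hp he hq hk1 hkn K hcard a hmonic ha0 hnotmono f hf v hv hvmin h hh N hN
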